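/- arXiv:2410.01549 — 3 statements merged into one kernel-verified Lean document; each statement's English description precedes it below -/
import Mathlib

section
/- For every even integer n ≥ 4, every edge 2-coloring of the complete graph on 2n−1 vertices contains a monochromatic copy of K^+_{1,n}. Consequently R(K^+_{1,n}, K^+_{1,n}) ≤ 2n−1. -/
open SimpleGraph

/-- A monochromatic copy of `H` in the graph `G` edge-colored by `c`:
an injective map sending edges of `H` to edges of `G`, all image edges of one color. -/
def IsMonoCopy {α V : Type*} {k : ℕ} (G : SimpleGraph V) (c : V → V → Fin k)
    (H : SimpleGraph α) : Prop :=
  ∃ (f : α → V) (i : Fin k), Function.Injective f ∧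
    ∀ a b, H.Adj a b → G.Adj (f a) (f b) ∧ c (f a) (f b) = i

/-- The edge coloring `c` of `G` has no rainbow triangle. -/
def NoRainbowTriangle {V : Type*} {k : ℕ} (G : SimpleGraph V) (c : V → V → Fin k) : Prop :=
  ¬ ∃ x y z : V, G.Adj x y ∧ G.Adj y z ∧ G.Adj x z ∧
    c x y ≠ c y z ∧ c y z ≠ c x z ∧ c x y ≠ c x z

/-- The Gallai–Ramsey number `GR_k(H)`: the least `N` such that every
rainbow-triangle-free `k`-edge-coloring of the complete graph on `N` vertices
contains a monochromatic copy of `H`. -/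
noncomputable def GallaiRamsey (k : ℕ) {α : Type*} (H : SimpleGraph α) : ℕ :=
  sInf {N | ∀ c : Fin N → Fin N → Fin k, (∀ x y, c x y = c y x) →
    NoRainbowTriangle (⊤ : SimpleGraph (Fin N)) c →
    IsMonoCopy (⊤ : SimpleGraph (Fin N)) c H}

/-- The diagonal two-color Ramsey number `R(H, H)`. -/
noncomputable def Ramsey2 {α : Type*} (H : SimpleGraph α) : ℕ :=
  sInf {N | ∀ c : Fin N → Fin N → Fin 2, (∀ x y, c x y = c y x) →
    IsMonoCopy (⊤ : SimpleGraph (Fin N)) c H}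

/-- The fan `F_3 = K_1 + 3K_2`: vertex `0` is the center, joined to all other
vertices, together with the three disjoint edges `12`, `34`, `56`. -/
def fanF3 : SimpleGraph (Fin 7) :=
  SimpleGraph.fromRel (fun a b => a = 0 ∨ (a.val % 2 = 1 ∧ b.val = a.val + 1))

/-- The kipas `K̂_m = K_1 + P_m`: vertex `0` is the center, joined to all other
vertices, and `1, 2, …, m` form a path. -/
def kipasG (m : ℕ) : SimpleGraph (Fin (m + 1)) :=
  SimpleGraph.fromRel (fun a b => a = 0 ∨ (1 ≤ a.val ∧ b.val = a.val + 1))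

/-- The wheel `W_m = K_1 + C_m`: vertex `0` is the center, joined to all other
vertices, and `1, 2, …, m` form a cycle. -/
def wheelG (m : ℕ) : SimpleGraph (Fin (m + 1)) :=
  SimpleGraph.fromRel (fun a b =>
    a = 0 ∨ (1 ≤ a.val ∧ b.val = a.val + 1) ∨ (a.val = m ∧ b.val = 1))

/-- The star `K_{1,n}`: vertex `0` is the center, joined to all other vertices. -/
def starG (n : ℕ) : SimpleGraph (Fin (n + 1)) :=
  SimpleGraph.fromRel (fun a _ => a = 0)

/-- `K⁺_{1,n}`, the star `K_{1,n}` with one edge subdivided: vertex `0` is joined to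
`1, …, n`, and the extra vertex `n+1` is joined to `n`. -/
def starPlusG (n : ℕ) : SimpleGraph (Fin (n + 2)) :=
  SimpleGraph.fromRel (fun a b => (a = 0 ∧ b.val ≤ n) ∨ (a.val = n ∧ b.val = n + 1))

/-- The complete graph on `Fin N` with the single edge `{0, 1}` deleted. -/
def compMinusEdge (N : ℕ) : SimpleGraph (Fin N) where
  Adj x y := x ≠ y ∧ ¬(x.val = 0 ∧ y.val = 1) ∧ ¬(x.val = 1 ∧ y.val = 0)
  symm := by
    refine ⟨?_⟩
    intro x y h
    exact ⟨h.1.symm, fun hc => h.2.2 ⟨hc.2, hc.1⟩, fun hc => h.2.1 ⟨hc.2, hc.1⟩⟩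
  loopless := by refine ⟨?_⟩; intro x h; exact h.1 rfl

/-- The complete graph on `Fin M` together with one extra vertex (`none`)
joined exactly to the vertices of `A`. -/
def addVertex (M : ℕ) (A : Set (Fin M)) : SimpleGraph (Option (Fin M)) where
  Adj x y := (∃ a b : Fin M, x = some a ∧ y = some b ∧ a ≠ b) ∨
    (∃ a ∈ A, (x = some a ∧ y = none) ∨ (x = none ∧ y = some a))
  symm := by
    refine ⟨?_⟩
    rintro x y (⟨a, b, hx, hy, hab⟩ | ⟨a, ha, (⟨hx, hy⟩ | ⟨hx, hy⟩)⟩)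
    · exact Or.inl ⟨b, a, hy, hx, hab.symm⟩
    · exact Or.inr ⟨a, ha, Or.inr ⟨hy, hx⟩⟩
    · exact Or.inr ⟨a, ha, Or.inl ⟨hy, hx⟩⟩
  loopless := by
    refine ⟨?_⟩
    rintro x (⟨a, b, hx, hy, hab⟩ | ⟨a, ha, (⟨hx, hy⟩ | ⟨hx, hy⟩)⟩) <;> simp_all

/-- The star-critical Gallai–Ramsey number `GR*_k(H)`: the least `s` such that
every rainbow-triangle-free `k`-edge-coloring of the complete graph on
`GR_k(H) - 1` vertices plus one extra vertex joined to exactly `s` of them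
contains a monochromatic copy of `H`. -/
noncomputable def GRstar (k : ℕ) {α : Type*} (H : SimpleGraph α) : ℕ :=
  sInf {s | ∀ A : Finset (Fin (GallaiRamsey k H - 1)), A.card = s →
    ∀ c : Option (Fin (GallaiRamsey k H - 1)) → Option (Fin (GallaiRamsey k H - 1)) → Fin k,
      (∀ x y, c x y = c y x) →
      NoRainbowTriangle (addVertex (GallaiRamsey k H - 1) (↑A)) c →
      IsMonoCopy (addVertex (GallaiRamsey k H - 1) (↑A)) c H}

/-- `H` is Gallai-Ramsey-full for `k` colors: the complete graph on `GR_k(H)`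
vertices minus one edge admits a rainbow-triangle-free `k`-edge-coloring with
no monochromatic copy of `H`. -/
def GallaiRamseyFull (k : ℕ) {α : Type*} (H : SimpleGraph α) : Prop :=
  ∃ c : Fin (GallaiRamsey k H) → Fin (GallaiRamsey k H) → Fin k,
    (∀ x y, c x y = c y x) ∧
    NoRainbowTriangle (compMinusEdge (GallaiRamsey k H)) c ∧
    ¬ IsMonoCopy (compMinusEdge (GallaiRamsey k H)) c H

/-- Reachability inside the vertex set `s`: there is a walk all of whose
vertices lie in `s`. -/
def ReachableWithin {V : Type*} (R : SimpleGraph V) (s : Set V) (u v : V) : Prop :=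
  ∃ w : R.Walk u v, ∀ x ∈ w.support, x ∈ s

/-!
Let `G` be the first color class and `Gᶜ` the second. Every vertex has degree `2n - 2` in the
complete graph on `2n - 1` vertices. As `2n - 1` is odd, some vertex has even degree in `G`, and
as `n - 1` is odd, this degree is not `n - 1`; so the vertex has degree at least `n` in `G` or
in `Gᶜ`, say in `G`. Call it `v`, with neighborhood `N`, and suppose that `K⁺_{1,n}` is not
contained in `G`. Then no edge of `G` leaves `N ∪ {v}`. If two vertices `a ≠ b` lie outside
`N ∪ {v}`, they are joined to all of `N` in `Gᶜ`: the star from `a` to `N` together with an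
edge from `N` to `b` is the required copy. Otherwise `|N| > n`, so that `N` spans no edge of `G`
either, and each vertex of `N` is joined in `Gᶜ` to all vertices but `v`.
-/

section ColorClass

variable {α V : Type*} {k : ℕ}

/-- The graph formed by the edges of color `i` in the complete graph on `V` edge-colored by `c`.
The symmetrization in `fromRel` is harmless, as edge colorings are symmetric. -/
def colorClass (c : V → V → Fin k) (i : Fin k) : SimpleGraph V :=
  SimpleGraph.fromRel fun x y => c x y = i

lemma colorClass_adj {c : V → V → Fin k} (hc : ∀ x y, c x y = c y x) {i : Fin k} {x y : V} :
    (colorClass c i).Adj x y ↔ x ≠ y ∧ c x y = i := by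
  rw [colorClass, SimpleGraph.fromRel_adj, hc y x, or_self]

lemma compl_colorClass_zero {c : V → V → Fin 2} (hc : ∀ x y, c x y = c y x) :
    (colorClass c 0)ᶜ = colorClass c 1 := by
  ext x y
  rw [SimpleGraph.compl_adj, colorClass_adj hc, colorClass_adj hc]
  grind

lemma isMonoCopy_top_iff_exists_isContained_colorClass {c : V → V → Fin k}
    (hc : ∀ x y, c x y = c y x) (H : SimpleGraph α) :
    IsMonoCopy (⊤ : SimpleGraph V) c H ↔ ∃ i, H ⊑ colorClass c i := by
  constructor
  · rintro ⟨f, i, hf, hadj⟩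
    exact ⟨i, ⟨⟨f, fun {a b} hab => (colorClass_adj hc).2 (hadj a b hab)⟩, hf⟩⟩
  · rintro ⟨i, ⟨f⟩⟩
    exact ⟨f, i, f.injective, fun a b hab => (colorClass_adj hc).1 (f.toHom.map_adj hab)⟩

end ColorClass

lemma exists_injective_fin_last_eq {α : Type*} {S : Finset α} {a : α} (ha : a ∈ S) {m : ℕ}
    (hcard : m + 1 ≤ S.card) :
    ∃ f : Fin (m + 1) → α, Function.Injective f ∧ (∀ i, f i ∈ S) ∧ f (Fin.last m) = a := by
  classical
  obtain ⟨g⟩ : Nonempty (Fin m ↪ S.erase a) := by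
    apply Function.Embedding.nonempty_of_card_le
    rw [Fintype.card_fin, Fintype.card_coe, Finset.card_erase_of_mem ha]
    omega
  refine ⟨Fin.snoc (fun i => (g i : α)) a, ?_, Fin.lastCases ?_ fun i => ?_, Fin.snoc_last ..⟩
  · refine Fin.snoc_injective_iff.2 ⟨Subtype.val_injective.comp g.injective, ?_⟩
    rintro ⟨i, hi⟩
    exact Finset.ne_of_mem_erase (g i).2 hi
  · simpa only [Fin.snoc_last] using ha
  · simpa only [Fin.snoc_castSucc] using Finset.mem_of_mem_erase (g i).2

section StarPlus

variable {V : Type*} {G : SimpleGraph V} {n : ℕ} {u v w : V}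

lemma starPlusG_isContained_of_injective {f : Fin (n + 2) → V} (hf : Function.Injective f)
    (hstar : ∀ b : Fin (n + 2), b ≠ 0 → b.val ≤ n → G.Adj (f 0) (f b))
    (hedge : G.Adj (f (Fin.last n).castSucc) (f (Fin.last (n + 1)))) :
    starPlusG n ⊑ G := by
  have adj_of_rel : ∀ a b : Fin (n + 2), a ≠ b →
      (a = 0 ∧ b.val ≤ n) ∨ (a.val = n ∧ b.val = n + 1) → G.Adj (f a) (f b) := by
    rintro a b hab (⟨rfl, hb⟩ | ⟨ha, hb⟩)
    · exact hstar b hab.symm hb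
    · obtain rfl : a = (Fin.last n).castSucc := Fin.ext ha
      obtain rfl : b = Fin.last (n + 1) := Fin.ext hb
      exact hedge
  refine ⟨⟨f, fun {a b} hab => ?_⟩, hf⟩
  rw [starPlusG, SimpleGraph.fromRel_adj] at hab
  exact hab.2.elim (adj_of_rel a b hab.1) fun h => (adj_of_rel b a hab.1.symm h).symm

lemma starPlusG_isContained_of_forall_mem_adj (hn : n ≠ 0) {S : Finset V}
    (hS : ∀ x ∈ S, G.Adj v x) (hcard : n ≤ S.card) (hw : w ∈ S) (hu : u ∉ S) (huv : u ≠ v)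
    (hwu : G.Adj w u) : starPlusG n ⊑ G := by
  obtain ⟨m, rfl⟩ := Nat.exists_eq_succ_of_ne_zero hn
  obtain ⟨leaves, leaves_injective, leaves_mem, leaves_last⟩ :=
    exists_injective_fin_last_eq hw hcard
  have hv : v ∉ S := fun h => G.irrefl (hS v h)
  refine starPlusG_isContained_of_injective (f := Fin.cons v (Fin.snoc leaves u)) ?_ ?_ ?_
  · simp only [Fin.cons_injective_iff, Fin.snoc_injective_iff, Fin.range_snoc]
    grind
  · refine Fin.cases (fun h => absurd rfl h) (Fin.lastCases ?_ ?_)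
    · intro _ h
      simp at h
    · intro i _ _
      simpa using hS _ (leaves_mem i)
  · rw [← Fin.succ_last, ← Fin.succ_last, ← Fin.succ_castSucc, Fin.cons_succ, Fin.cons_succ,
      Fin.snoc_castSucc, Fin.snoc_last, leaves_last]
    exact hwu

variable [Fintype V] [DecidableRel G.Adj]

lemma starPlusG_isContained_of_le_degree_of_not_adj (hn : n ≠ 0) (hdeg : n ≤ G.degree v)
    (hvw : G.Adj v w) (hwu : G.Adj w u) (huv : u ≠ v) (hvu : ¬ G.Adj v u) :
    starPlusG n ⊑ G :=
  starPlusG_isContained_of_forall_mem_adj hn (S := G.neighborFinset v) (by simp) hdeg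
    (by simpa using hvw) (by simpa using hvu) huv hwu

lemma starPlusG_isContained_of_lt_degree (hn : n ≠ 0) (hdeg : n < G.degree v)
    (hvw : G.Adj v w) (hwu : G.Adj w u) (huv : u ≠ v) : starPlusG n ⊑ G := by
  classical
  refine starPlusG_isContained_of_forall_mem_adj hn (S := (G.neighborFinset v).erase u)
    (by simp) ?_ (by simpa [hvw] using hwu.ne) (Finset.notMem_erase _ _) huv hwu
  exact (Nat.le_sub_one_of_lt hdeg).trans Finset.pred_card_le_card_erase

lemma starPlusG_isContained_compl_of_free_of_compl_adj (hfree : (starPlusG n).Free G)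
    (hn : n ≠ 0) (hdeg : n ≤ G.degree v) {a b : V} (ha : Gᶜ.Adj v a) (hb : Gᶜ.Adj v b)
    (hab : a ≠ b) : starPlusG n ⊑ Gᶜ := by
  have compl_adj_of_nonneighbor : ∀ w ∈ G.neighborFinset v, ∀ u, Gᶜ.Adj v u → Gᶜ.Adj w u := by
    intro w hw u hvu
    rw [SimpleGraph.mem_neighborFinset] at hw
    rw [SimpleGraph.compl_adj] at hvu ⊢
    exact ⟨fun h => hvu.2 (h ▸ hw), fun hwu =>
      hfree (starPlusG_isContained_of_le_degree_of_not_adj hn hdeg hw hwu hvu.1.symm hvu.2)⟩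
  obtain ⟨w, hw⟩ : (G.neighborFinset v).Nonempty :=
    Finset.card_pos.1 ((Nat.pos_of_ne_zero hn).trans_le hdeg)
  exact starPlusG_isContained_of_forall_mem_adj hn
    (fun x hx => (compl_adj_of_nonneighbor x hx a ha).symm) hdeg hw
    (by simpa using ((SimpleGraph.compl_adj _ _ _).1 hb).2) hab.symm
    (compl_adj_of_nonneighbor w hw b hb)

lemma starPlusG_isContained_compl_of_free_of_lt_degree (hfree : (starPlusG n).Free G) (hn : 2 ≤ n)
    (hV : n + 3 ≤ Fintype.card V) (hdeg : n < G.degree v) : starPlusG n ⊑ Gᶜ := by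
  classical
  have eq_of_adj : ∀ w, G.Adj v w → ∀ u, G.Adj w u → u = v := fun w hvw u hwu =>
    by_contra fun huv => hfree (starPlusG_isContained_of_lt_degree (by omega) hdeg hvw hwu huv)
  obtain ⟨w, x, y, hw, hx, hy, hwx, hwy, hxy⟩ :=
    Finset.two_lt_card_iff.1 (hn.trans_lt hdeg : 2 < (G.neighborFinset v).card)
  rw [SimpleGraph.mem_neighborFinset] at hw hx hy
  have degree_w : G.degree w ≤ 1 :=
    Finset.card_le_one.2 fun a ha b hb => by
      rw [SimpleGraph.mem_neighborFinset] at ha hb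
      rw [eq_of_adj w hw a ha, eq_of_adj w hw b hb]
  have degree_compl_w : n < Gᶜ.degree w := by
    rw [SimpleGraph.degree_compl]
    omega
  exact starPlusG_isContained_of_lt_degree (by omega) degree_compl_w
    ((SimpleGraph.compl_adj _ _ _).2 ⟨hwx, fun h => hx.ne (eq_of_adj w hw x h).symm⟩)
    ((SimpleGraph.compl_adj _ _ _).2 ⟨hxy, fun h => hy.ne (eq_of_adj x hx y h).symm⟩) hwy.symm

lemma starPlusG_isContained_or_isContained_compl_of_le_degree (hn : 2 ≤ n)
    (hV : n + 3 ≤ Fintype.card V) (hdeg : n ≤ G.degree v) : starPlusG n ⊑ G ∨ starPlusG n ⊑ Gᶜ := by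
  classical
  refine or_iff_not_imp_left.2 fun hfree => ?_
  rcases lt_or_ge 1 (Gᶜ.degree v) with hcompl | hcompl
  · obtain ⟨a, ha, b, hb, hab⟩ := Finset.one_lt_card.1 hcompl
    rw [SimpleGraph.mem_neighborFinset] at ha hb
    exact starPlusG_isContained_compl_of_free_of_compl_adj hfree (by omega) hdeg ha hb hab
  · rw [SimpleGraph.degree_compl] at hcompl
    exact starPlusG_isContained_compl_of_free_of_lt_degree hfree hn hV (v := v) (by omega)

end StarPlus

section Parity

variable {V : Type*} [Fintype V] (G : SimpleGraph V) [DecidableRel G.Adj]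

lemma exists_even_degree_of_odd_card (hV : Odd (Fintype.card V)) : ∃ v, Even (G.degree v) := by
  by_contra! hodd
  simp only [Nat.not_even_iff_odd] at hodd
  have heven := G.even_card_odd_degree_vertices
  rw [Finset.filter_true_of_mem fun v _ => hodd v, Finset.card_univ] at heven
  exact Nat.not_even_iff_odd.2 hV heven

lemma exists_le_degree_or_le_degree_compl [DecidableEq V] {n : ℕ} (hn : Even n)
    (hV : Fintype.card V + 1 = 2 * n) : ∃ v, n ≤ G.degree v ∨ n ≤ Gᶜ.degree v := by
  obtain ⟨v, hv⟩ := exists_even_degree_of_odd_card G ⟨n - 1, by omega⟩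
  refine ⟨v, ?_⟩
  have hne : G.degree v ≠ n - 1 := by grind
  rw [SimpleGraph.degree_compl]
  omega

end Parity

lemma starPlusG_isContained_or_isContained_compl_of_card {V : Type*} [Fintype V]
    (G : SimpleGraph V) {n : ℕ} (hn : 4 ≤ n) (hne : Even n) (hV : Fintype.card V + 1 = 2 * n) :
    starPlusG n ⊑ G ∨ starPlusG n ⊑ Gᶜ := by
  classical
  obtain ⟨v, hdeg | hdeg⟩ := exists_le_degree_or_le_degree_compl G hne hV
  · exact starPlusG_isContained_or_isContained_compl_of_le_degree (by omega) (by omega) hdeg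
  · have := starPlusG_isContained_or_isContained_compl_of_le_degree (by omega) (by omega) hdeg
    rwa [compl_compl, or_comm] at this

/-- For every even `n ≥ 4`, every edge 2-coloring of the complete graph on
`2n − 1` vertices contains a monochromatic copy of `K⁺_{1,n}`; consequently
`R(K⁺_{1,n}, K⁺_{1,n}) ≤ 2n − 1`. -/
theorem starPlus_ramsey_upper (n : ℕ) (hn : 4 ≤ n) (hne : n % 2 = 0) :
    (∀ c : Fin (2 * n - 1) → Fin (2 * n - 1) → Fin 2, (∀ x y, c x y = c y x) →
      IsMonoCopy (⊤ : SimpleGraph (Fin (2 * n - 1))) c (starPlusG n)) ∧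
    Ramsey2 (starPlusG n) ≤ 2 * n - 1 := by
  have isMonoCopy (c : Fin (2 * n - 1) → Fin (2 * n - 1) → Fin 2) (hc : ∀ x y, c x y = c y x) :
      IsMonoCopy (⊤ : SimpleGraph (Fin (2 * n - 1))) c (starPlusG n) := by
    rw [isMonoCopy_top_iff_exists_isContained_colorClass hc]
    have hcard : Fintype.card (Fin (2 * n - 1)) + 1 = 2 * n := by
      rw [Fintype.card_fin]
      omega
    rcases starPlusG_isContained_or_isContained_compl_of_card (colorClass c 0) hn
      (Nat.even_iff.2 hne) hcard with hzero | hone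
    · exact ⟨0, hzero⟩
    · exact ⟨1, compl_colorClass_zero hc ▸ hone⟩
  exact ⟨isMonoCopy, Nat.sInf_le isMonoCopy⟩
end

section
/- For every integer k ≥ 3 and every even integer n ≥ 12, every Gallai k-coloring of the complete graph on 5n/2 + k − 6 vertices contains a monochromatic copy of K^+_{1,n}. Consequently GR_k(K^+_{1,n}) = 5n/2 + k − 6. -/
open SimpleGraph

/-!
By Gallai's theorem the vertices can be partitioned into parts such that the color between two parts
depends only on these parts, and only two colors occur between parts. Weight each part by its size
and let `n = 2 * s + 2`. If no monochromatic star has more than `2 * s + 1` leaves, then comparing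
the total weight with the weights of monochromatic stars in the reduced two-coloring gives at most
`5 * s + 1` vertices.

Otherwise some `v` has at least `n` neighbors in a color `i`, and avoiding `starPlusG n` forces each
further vertex `w` to see all these neighbors in the color of `vw`, these colors being distinct for
distinct `w`. If there are exactly `n` such neighbors, this leaves few vertices. If there are more,
then every edge of color `i` contains `v`, and one deletes `v` together with the color `i`.

For the lower bound, blow up the pentagon coloring of `K₅` to parts of size `s`, one of them
enlarged by a vertex, and then add a new vertex joined to everything in a new color, once for each
color after the third.
-/

section GallaiColoring

variable {V W C : Type*} {c : V → V → C}

/-- A Gallai coloring of the complete graph on `V`: an edge coloring without rainbow triangle. In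
contrast to `NoRainbowTriangle`, symmetry is included and the colors form an arbitrary type. The
diagonal values `c x x` are junk. -/
structure IsGallaiColoring (c : V → V → C) : Prop where
  symm (x y : V) : c x y = c y x
  eq_or_eq_or_eq {x y z : V} (hxy : x ≠ y) (hyz : y ≠ z) (hxz : x ≠ z) :
    c x y = c y z ∨ c y z = c x z ∨ c x y = c x z

/-- The graph formed by the edges of color `i`, so that a monochromatic copy of `H` in color `i` is
a copy of `H` in `colorGraph c i`. -/
def colorGraph (c : V → V → C) (i : C) : SimpleGraph V :=
  fromRel fun x y => c x y = i

/-- A partition of the vertices, given as a setoid, such that the color of an edge between two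
different parts depends only on these parts. -/
def IsHomogeneous (c : V → V → C) (r : Setoid V) : Prop :=
  ∀ ⦃x x' y y' : V⦄, r x x' → r y y' → ¬ r x y → c x y = c x' y'

theorem colorGraph_comp {f : W → V} (hf : f.Injective) (i : C) :
    colorGraph (fun x y => c (f x) (f y)) i = (colorGraph c i).comap f := by
  ext x y
  simp [colorGraph, hf.ne_iff]

theorem free_colorGraph_comp {α : Type*} {H : SimpleGraph α} {f : W → V} (hf : f.Injective) {i : C}
    (hH : H.Free (colorGraph c i)) : H.Free (colorGraph (fun x y => c (f x) (f y)) i) := by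
  rw [colorGraph_comp hf]
  exact fun hc => hH (hc.trans ⟨(Embedding.comap ⟨f, hf⟩ _).toCopy⟩)

theorem colorGraph_induce (s : Set V) (i : C) :
    (colorGraph c i).induce s = colorGraph (fun x y : s => c x y) i :=
  (colorGraph_comp Subtype.val_injective i).symm

theorem IsHomogeneous.eq_out {r : Setoid V} (hr : IsHomogeneous c r) {x y : V} (hxy : ¬ r x y) :
    c x y = c (⟦x⟧ : Quotient r).out (⟦y⟧ : Quotient r).out :=
  hr (r.symm (Quotient.mk_out x)) (r.symm (Quotient.mk_out y)) hxy

theorem IsHomogeneous.eq_out_of_comap {r : Setoid V} (hr : IsHomogeneous c r)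
    {q : Setoid (Quotient r)} {x y : V} (hxy : ¬ q.comap (Quotient.mk r) x y) :
    c x y = c (⟦x⟧ : Quotient r).out (⟦y⟧ : Quotient r).out :=
  hr.eq_out fun e => hxy (Setoid.comap_rel _ _ _ _ |>.2 (Quotient.sound e ▸ q.refl _))

theorem IsHomogeneous.comap_mk {r : Setoid V} (hr : IsHomogeneous c r) {q : Setoid (Quotient r)}
    (hq : IsHomogeneous (fun A B : Quotient r => c A.out B.out) q) :
    IsHomogeneous c (q.comap (Quotient.mk r)) := by
  intro x x' y y' hx hy hxy
  have hxy' : ¬ q.comap (Quotient.mk r) x' y' := fun e => hxy (q.trans hx (q.trans e (q.symm hy)))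
  rw [hr.eq_out_of_comap hxy, hr.eq_out_of_comap hxy']
  exact hq hx hy hxy

namespace IsGallaiColoring

variable (h : IsGallaiColoring c)
include h

theorem colorGraph_adj {i : C} {x y : V} : (colorGraph c i).Adj x y ↔ x ≠ y ∧ c x y = i := by
  simp [colorGraph, h.symm y x]

theorem comp {f : W → V} (hf : f.Injective) : IsGallaiColoring fun x y => c (f x) (f y) where
  symm x y := h.symm (f x) (f y)
  eq_or_eq_or_eq hxy hyz hxz := h.eq_or_eq_or_eq (hf.ne hxy) (hf.ne hyz) (hf.ne hxz)

theorem eq_of_adj {i : C} {x x' y : V} (hxx' : (colorGraph c i).Adj x x') (hxy : x ≠ y)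
    (hx'y : x' ≠ y) (hcx : c x y ≠ i) (hcx' : c x' y ≠ i) : c x y = c x' y := by
  rw [h.colorGraph_adj] at hxx'
  have := h.eq_or_eq_or_eq hxx'.1 hx'y hxy
  grind

theorem eq_of_reachable {i : C} {x x' y : V} (hx : (colorGraph c i).Reachable x x')
    (hy : ¬ (colorGraph c i).Reachable x y) : c x y = c x' y := by
  have ne_of_not_reachable {u : V} (hu : ¬ (colorGraph c i).Reachable u y) : u ≠ y ∧ c u y ≠ i :=
    have huy : u ≠ y := fun e => hu (e ▸ Reachable.rfl)
    ⟨huy, fun hc => hu (Adj.reachable (h.colorGraph_adj.2 ⟨huy, hc⟩))⟩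
  obtain ⟨p⟩ := hx
  induction p with
  | nil => rfl
  | cons huv _ ih =>
    have hv := fun hvy => hy (huv.reachable.trans hvy)
    rw [← ih hv]
    exact h.eq_of_adj huv (ne_of_not_reachable hy).1 (ne_of_not_reachable hv).1
      (ne_of_not_reachable hy).2 (ne_of_not_reachable hv).2

theorem isHomogeneous_reachableSetoid (i : C) :
    IsHomogeneous c (colorGraph c i).reachableSetoid := by
  intro x x' y y' hx hy hxy
  have hyx' : ¬ (colorGraph c i).Reachable y x' := fun hyx' => hxy (hx.trans hyx'.symm)
  rw [h.eq_of_reachable hx hxy, h.symm, h.eq_of_reachable hy hyx', h.symm]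

end IsGallaiColoring

theorem exists_reachable_induce_compl_singleton_adj {G : SimpleGraph V} (hG : G.Preconnected)
    {v : V} (x : ({v}ᶜ : Set V)) :
    ∃ w : ({v}ᶜ : Set V), (G.induce {v}ᶜ).Reachable x w ∧ G.Adj v w := by
  let S : Set V := {y | ∃ hy : y ∈ ({v}ᶜ : Set V), (G.induce {v}ᶜ).Reachable x ⟨y, hy⟩}
  obtain ⟨p⟩ := hG x v
  obtain ⟨d, -, ⟨hd, hxd⟩, hdS⟩ :=
    p.exists_boundary_dart S ⟨x.2, Reachable.rfl⟩ fun ⟨hv, _⟩ => hv rfl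
  suffices d.snd = v from ⟨⟨d.fst, hd⟩, hxd, this ▸ d.adj.symm⟩
  by_contra hdv
  exact hdS ⟨hdv, hxd.trans (Adj.reachable d.adj)⟩

namespace IsGallaiColoring

variable (h : IsGallaiColoring c)
include h

theorem eq_of_reachable_induce {s : Set V} {i : C} {x x' y : s}
    (hx : ((colorGraph c i).induce s).Reachable x x')
    (hy : ¬ ((colorGraph c i).induce s).Reachable x y) : c x y = c x' y := by
  rw [colorGraph_induce] at hx hy
  exact (h.comp Subtype.val_injective).eq_of_reachable hx hy

theorem eq_of_not_reachable_induce {v : V} {a : C} (ha : (colorGraph c a).Preconnected)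
    {u x : ({v}ᶜ : Set V)} (hu : c v u ≠ a)
    (hux : ¬ ((colorGraph c a).induce {v}ᶜ).Reachable u x) : c u x = c v u := by
  obtain ⟨w, hxw, hvw⟩ := exists_reachable_induce_compl_singleton_adj ha x
  have huw : ¬ ((colorGraph c a).induce {v}ᶜ).Reachable u w := fun huw => hux (huw.trans hxw.symm)
  have huw' : (u : V) ≠ w := fun e => huw (Subtype.ext e ▸ Reachable.rfl)
  have hcuw : c u w ≠ a := fun e => huw (Adj.reachable (h.colorGraph_adj.2 ⟨huw', e⟩))
  have hcvw := (h.colorGraph_adj.1 hvw).2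
  calc c u x = c w u := by
        rw [h.symm, h.eq_of_reachable_induce hxw fun hxu => hux hxu.symm]
    _ = c v u := by
        have := h.eq_or_eq_or_eq (Ne.symm u.2) huw' (Ne.symm w.2)
        rw [h.symm w u]
        grind

theorem preconnected_induce_compl_singleton {a b d : C} (hab : a ≠ b) (had : a ≠ d) (hbd : b ≠ d)
    (ha : (colorGraph c a).Preconnected) (hb : (colorGraph c b).Preconnected)
    (hd : (colorGraph c d).Preconnected) (v : V) :
    ((colorGraph c a).induce {v}ᶜ).Preconnected := by
  intro x y
  have : Nontrivial V := ⟨⟨x, v, x.2⟩⟩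
  have exists_eq {i : C} (hi : (colorGraph c i).Preconnected) : ∃ u : ({v}ᶜ : Set V), c v u = i :=
    let ⟨u, hu⟩ := hi.exists_adj_of_nontrivial v
    ⟨⟨u, hu.ne'⟩, (h.colorGraph_adj.1 hu).2⟩
  obtain ⟨u, hu⟩ := exists_eq hb
  obtain ⟨u', hu'⟩ := exists_eq hd
  have eq_b {t} := h.eq_of_not_reachable_induce ha (u := u) (x := t) (hu ▸ hab.symm)
  have eq_d {t} := h.eq_of_not_reachable_induce ha (u := u') (x := t) (hu' ▸ had.symm)
  have huu' : ((colorGraph c a).induce {v}ᶜ).Reachable u u' := by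
    by_contra hn
    exact hbd (by rw [← hu, ← hu', ← eq_b hn, ← eq_d fun e => hn e.symm, h.symm])
  have reachable_u (t) : ((colorGraph c a).induce {v}ᶜ).Reachable u t := by
    by_contra hn
    have hn' : ¬ ((colorGraph c a).induce {v}ᶜ).Reachable u' t := fun e => hn (huu'.trans e)
    exact hbd (by rw [← hu, ← hu', ← eq_b hn, ← eq_d hn', h.eq_of_reachable_induce huu' hn])
  exact (reachable_u x).symm.trans (reachable_u y)

theorem not_preconnected_of_ne [Finite V] [Nontrivial V] {a b d : C} (hab : a ≠ b) (had : a ≠ d)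
    (hbd : b ≠ d) (ha : (colorGraph c a).Preconnected) (hb : (colorGraph c b).Preconnected) :
    ¬ (colorGraph c d).Preconnected := by
  intro hd
  induction hn : Nat.card V using Nat.strong_induction_on generalizing V with
  | _ n ih =>
  subst hn
  obtain ⟨v, -⟩ := exists_pair_ne V
  obtain ⟨x, hx⟩ := ha.exists_adj_of_nontrivial v
  obtain ⟨y, hy⟩ := hb.exists_adj_of_nontrivial v
  have hxy : x ≠ y := fun e =>
    hab ((h.colorGraph_adj.1 hx).2.symm.trans (e ▸ (h.colorGraph_adj.1 hy).2))
  have : Nontrivial ({v}ᶜ : Set V) :=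
    ⟨⟨x, hx.ne'⟩, ⟨y, hy.ne'⟩, fun e => hxy (congrArg Subtype.val e)⟩
  refine ih _ (Finite.card_subtype_lt (p := (· ∈ ({v}ᶜ : Set V))) (x := v) (by simp))
    (h.comp (Subtype.val_injective (p := (· ∈ ({v}ᶜ : Set V))))) ?_ ?_ ?_ rfl
  all_goals rw [← colorGraph_induce ({v}ᶜ : Set V)]
  · exact h.preconnected_induce_compl_singleton hab had hbd ha hb hd v
  · exact h.preconnected_induce_compl_singleton hab.symm hbd had hb ha hd v
  · exact h.preconnected_induce_compl_singleton had.symm hbd.symm hab hd ha hb v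

theorem exists_not_preconnected [Finite V] [Nontrivial V]
    (hc : ∀ a b, ∃ x y, x ≠ y ∧ c x y ≠ a ∧ c x y ≠ b) :
    ∃ x y, x ≠ y ∧ ¬ (colorGraph c (c x y)).Preconnected := by
  by_contra! hp
  obtain ⟨x, y, hxy⟩ := exists_pair_ne V
  obtain ⟨x', y', hxy', ha, -⟩ := hc (c x y) (c x y)
  obtain ⟨u, v, huv, ha', hb⟩ := hc (c x y) (c x' y')
  exact h.not_preconnected_of_ne ha.symm ha'.symm hb.symm (hp _ _ hxy) (hp _ _ hxy') (hp _ _ huv)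

-- Contract the components of a disconnected color until two colors suffice.
theorem exists_isHomogeneous_setoid [Finite V] [Nontrivial V] :
    ∃ (r : Setoid V) (a b : C), (∃ x y, ¬ r x y) ∧ IsHomogeneous c r ∧
      ∀ x y, ¬ r x y → c x y = a ∨ c x y = b := by
  induction hn : Nat.card V using Nat.strong_induction_on generalizing V with
  | _ n ih =>
  subst hn
  by_cases hc : ∃ a b, ∀ x y, x ≠ y → c x y = a ∨ c x y = b
  · obtain ⟨a, b, hab⟩ := hc
    obtain ⟨x, y, hxy⟩ := exists_pair_ne V
    refine ⟨⊥, a, b, ⟨x, y, hxy⟩, ?_, hab⟩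
    rintro x _ y _ rfl rfl -
    rfl
  push Not at hc
  obtain ⟨x, y, hxy, hp⟩ := h.exists_not_preconnected hc
  let r := (colorGraph c (c x y)).reachableSetoid
  have hr : IsHomogeneous c r := h.isHomogeneous_reachableSetoid _
  obtain ⟨x', y', hx'y'⟩ : ∃ x' y', ¬ r x' y' := by
    by_contra! he
    exact hp he
  have : Nontrivial (Quotient r) := ⟨⟦x'⟧, ⟦y'⟧, fun e => hx'y' (Quotient.exact e)⟩
  have hlt : Nat.card (Quotient r) < Nat.card V := by
    refine (Nat.card_le_card_of_surjective _ Quotient.mk_surjective).lt_of_ne fun e => hxy ?_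
    refine ((Nat.bijective_iff_surjective_and_card _).2 ⟨Quotient.mk_surjective, e.symm⟩).1 ?_
    exact Quotient.sound (Adj.reachable (h.colorGraph_adj.2 ⟨hxy, rfl⟩))
  obtain ⟨q, a, b, ⟨A, B, hAB⟩, hq, hqab⟩ := ih _ hlt (h.comp Quotient.out_injective) rfl
  induction A using Quotient.inductionOn with | _ x₀ =>
  induction B using Quotient.inductionOn with | _ y₀ =>
  refine ⟨q.comap (Quotient.mk r), a, b, ⟨x₀, y₀, hAB⟩, hr.comap_mk hq, fun x y hxy => ?_⟩
  rw [hr.eq_out_of_comap hxy]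
  exact hqab _ _ hxy

end IsGallaiColoring
end GallaiColoring

section MonoStar

open Finset

variable {V C : Type*} {c : V → V → C} {w : V → ℕ} {d : ℕ} {a b : C}

theorem sum_le_card_mul_add_one [Fintype V] [Nontrivial V] {s : ℕ}
    (hw : ∀ x y, x ≠ y → w x + w y ≤ 2 * s + 1) : ∑ x, w x ≤ Fintype.card V * s + 1 := by
  classical
  by_cases! hle : ∀ x, w x ≤ s
  · exact (sum_le_card_nsmul univ w s fun x _ => hle x).trans (by simp)
  obtain ⟨r, hr⟩ := hle
  obtain ⟨y, hyr⟩ := exists_ne r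
  have hry := hw r y hyr.symm
  obtain ⟨t, ht⟩ := Nat.exists_eq_add_of_le (le_of_add_le_left hry)
  have hsum : ∑ x ∈ univ.erase r, w x ≤ (Fintype.card V - 1) * t := by
    refine (sum_le_card_nsmul _ _ t fun x hx => ?_).trans_eq (by simp [card_erase_of_mem])
    have := hw r x (ne_of_mem_erase hx).symm
    omega
  have := add_sum_erase univ w (mem_univ r)
  obtain ⟨m, hm⟩ := Nat.exists_eq_add_of_lt (Fintype.one_lt_card (α := V))
  rw [hm, Nat.add_sub_cancel] at hsum
  rw [hm]
  nlinarith

/-- In the weighting `w` of the vertices, the leaves of every monochromatic star of the coloring `c`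
have total weight at most `d`. -/
def MonoStarWeightLE (c : V → V → C) (w : V → ℕ) (d : ℕ) : Prop :=
  ∀ ⦃z : V⦄ ⦃S : Finset V⦄ ⦃i : C⦄, z ∉ S → (∀ x ∈ S, c z x = i) → ∑ x ∈ S, w x ≤ d

namespace MonoStarWeightLE

theorem weight_le (h : MonoStarWeightLE c w d) {x z : V} (hxz : x ≠ z) : w x ≤ d := by
  simpa using h (z := z) (S := {x}) (i := c z x) (by simp [hxz.symm]) (by simp)

theorem add_le (h : MonoStarWeightLE c w d) {x y z : V} (hxy : x ≠ y) (hxz : x ≠ z) (hyz : y ≠ z)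
    (hz : c z x = c z y) : w x + w y ≤ d := by
  classical
  rw [← sum_pair hxy]
  exact h (z := z) (i := c z x) (by simp [hxz.symm, hyz.symm]) (by simp [hz])

theorem add_add_le (h : MonoStarWeightLE c w d) {x y z u : V} (hxy : x ≠ y) (hxz : x ≠ z)
    (hyz : y ≠ z) (hxu : x ≠ u) (hyu : y ≠ u) (hzu : z ≠ u) (huy : c u x = c u y)
    (huz : c u x = c u z) : w x + w y + w z ≤ d := by
  classical
  rw [add_assoc, ← sum_pair hyz, ← sum_insert (by simp [hxy, hxz])]
  exact h (z := u) (i := c u x) (by simp [hxu.symm, hyu.symm, hzu.symm]) (by simp [← huy, ← huz])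

theorem sum_le_add_card_mul [Fintype V] (h : MonoStarWeightLE c w d) {K : Finset C} {z : V}
    (hK : ∀ x, x ≠ z → c z x ∈ K) : ∑ x, w x ≤ w z + #K * d := by
  classical
  rw [← add_sum_erase _ _ (mem_univ z),
    ← sum_fiberwise_of_maps_to (t := K) (g := c z) (by simpa using hK)]
  gcongr
  exact sum_le_card_nsmul _ _ _ fun i _ => h (z := z) (i := i) (by simp) (by simp)

section TwoColors

variable (h : MonoStarWeightLE c w d) (hc : ∀ x y, c x y = c y x)
  (hab : ∀ x y, x ≠ y → c x y = a ∨ c x y = b)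
include h hc hab

theorem sum_le_of_card_eq_three [Fintype V] (hV : Fintype.card V = 3) : ∑ x, w x ≤ 2 * d := by
  classical
  obtain ⟨x, y, z, hxy, hxz, hyz, huniv⟩ := card_eq_three.1 hV
  have sum_eq : ∑ v, w v = w x + w y + w z := by
    rw [huniv, sum_insert (by simp [hxy, hxz]), sum_pair hyz, add_assoc]
  have := h.weight_le hxy
  have := h.weight_le hxy.symm
  have := h.weight_le hxz.symm
  have : c z x = c z y ∨ c y x = c y z ∨ c x y = c x z := by
    have := hab x y hxy
    have := hab x z hxz
    have := hab y z hyz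
    grind
  rcases this with e | e | e
  · have := h.add_le hxy hxz hyz e
    omega
  · have := h.add_le hxz hxy hyz.symm e
    omega
  · have := h.add_le hyz hxy.symm hxz.symm e
    omega

theorem add_add_add_le {r x y z : V} (hrx : r ≠ x) (hry : r ≠ y) (hrz : r ≠ z) (hxy : x ≠ y)
    (hxz : x ≠ z) (hyz : y ≠ z) (hr : c r x = c r y) : w r + w x + w y + w z ≤ 2 * d := by
  by_cases hrxz : c r x = c r z
  · have := h.add_add_le hxy hxz hyz hrx.symm hry.symm hrz.symm hr hrxz
    have := h.weight_le hrx
    omega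
  by_cases hx : c x r = c x z
  · have := h.add_le hxy hrx.symm hry.symm hr
    have := h.add_le hrz hrx hxz.symm hx
    omega
  by_cases hy : c y r = c y z
  · have := h.add_le hxy hrx.symm hry.symm hr
    have := h.add_le hrz hry hyz.symm hy
    omega
  have hz : c z x = c z y ∧ c z x = c z r := by
    have := hab r x hrx
    have := hab r z hrz
    have := hab x z hxz
    have := hab y z hyz
    grind
  have := h.add_add_le hxy hrx.symm hry.symm hxz hyz hrz hz.1 hz.2
  have := h.weight_le hxz.symm
  omega

theorem sum_le_of_card_eq_four [Fintype V] (hV : Fintype.card V = 4) : ∑ x, w x ≤ 2 * d := by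
  classical
  obtain ⟨r, x, y, z, hrx, hry, hrz, hxy, hxz, hyz, huniv⟩ := card_eq_four.1 hV
  have sum_eq : ∑ v, w v = w r + w x + w y + w z := by
    rw [huniv, sum_insert (by simp [hrx, hry, hrz]), sum_insert (by simp [hxy, hxz]),
      sum_pair hyz]
    ring
  have : c r x = c r y ∨ c r x = c r z ∨ c r y = c r z := by
    have := hab r x hrx
    have := hab r y hry
    have := hab r z hrz
    grind
  rcases this with e | e | e
  · have := h.add_add_add_le hc hab hrx hry hrz hxy hxz hyz e
    omega
  · have := h.add_add_add_le hc hab hrx hrz hry hxz hxy hyz.symm e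
    omega
  · have := h.add_add_add_le hc hab hry hrz hrx hyz hxy.symm hxz.symm e
    omega

end TwoColors

theorem exists_eq_of_five_le_card [Fintype V] (h : MonoStarWeightLE c 1 2)
    (hc : ∀ x y, c x y = c y x) (hab : ∀ x y, x ≠ y → c x y = a ∨ c x y = b)
    (hV : 5 ≤ Fintype.card V) {x y : V} (hxy : x ≠ y) : ∃ z, x ≠ z ∧ y ≠ z ∧ c z x = c z y := by
  classical
  let same (u v : V) : Finset V := {z ∈ {x, y}ᶜ | c u z = c u v}
  have card_same {u v : V} (hu : u ∈ ({x, y} : Finset V)) (hv : v ∈ ({x, y} : Finset V))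
      (huv : u ≠ v) : #(same u v) ≤ 1 := by
    have hle := h (z := u) (S := insert v (same u v)) (i := c u v) (by grind [mem_compl])
      (by grind)
    have hv' : v ∉ same u v := by grind [mem_compl]
    simpa [hv'] using hle
  have hlt : #(same x y ∪ same y x) < #({x, y}ᶜ : Finset V) := by
    have := card_union_le (same x y) (same y x)
    have := card_same (by simp) (by simp) hxy
    have := card_same (by simp) (by simp) hxy.symm
    rw [card_compl, card_pair hxy]
    omega
  obtain ⟨z, hz, hz'⟩ := exists_mem_notMem_of_card_lt_card hlt
  have hxz : x ≠ z := by grind [mem_compl]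
  have hyz : y ≠ z := by grind [mem_compl]
  refine ⟨z, hxz, hyz, ?_⟩
  have := hab x y hxy
  have := hab x z hxz
  have := hab y z hyz
  grind

theorem one_of_le_weight (h : MonoStarWeightLE c w d) {s m : ℕ} (hw : ∀ x, s ≤ w x)
    (hd : d < (m + 1) * s) : MonoStarWeightLE c 1 m := by
  intro z S i hz hS
  have hle : #S * s ≤ d := (card_nsmul_le_sum S w s fun x _ => hw x).trans (h hz hS)
  simpa using Nat.lt_succ_iff.1 (lt_of_mul_lt_mul_right (hle.trans_lt hd) s.zero_le)

theorem sum_le_of_two_colors [Fintype V] [Nontrivial V] {s : ℕ} (hs : 2 ≤ s)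
    (h : MonoStarWeightLE c w (2 * s + 1)) (hc : ∀ x y, c x y = c y x)
    (hab : ∀ x y, x ≠ y → c x y = a ∨ c x y = b) : ∑ x, w x ≤ 5 * s + 1 := by
  classical
  by_contra! hlt
  have mem_pair {z : V} (x : V) (hx : x ≠ z) : c z x ∈ ({a, b} : Finset C) := by
    simpa using hab z x hx.symm
  have := card_le_two (a := a) (b := b)
  have le_weight (r : V) : s ≤ w r := by
    have := h.sum_le_add_card_mul (z := r) mem_pair
    nlinarith
  have h₂ : MonoStarWeightLE c 1 2 := h.one_of_le_weight le_weight (by omega)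
  have card_le : Fintype.card V ≤ 5 := by
    obtain ⟨r, -⟩ := exists_pair_ne V
    have : Fintype.card V ≤ 1 + #{a, b} * 2 := by
      simpa using h₂.sum_le_add_card_mul (z := r) mem_pair
    omega
  have := Fintype.one_lt_card (α := V)
  obtain hV | hV | hV | hV : Fintype.card V = 2 ∨ Fintype.card V = 3 ∨ Fintype.card V = 4 ∨
    Fintype.card V = 5 := by omega
  · obtain ⟨x, y, hxy, huniv⟩ := card_eq_two.1 hV
    have := h.weight_le hxy
    have := h.weight_le hxy.symm
    rw [huniv, sum_pair hxy] at hlt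
    omega
  · have := h.sum_le_of_card_eq_three hc hab hV
    omega
  · have := h.sum_le_of_card_eq_four hc hab hV
    omega
  · have := sum_le_card_mul_add_one fun x y hxy =>
      let ⟨_, hxz, hyz, hz⟩ := h₂.exists_eq_of_five_le_card hc hab hV.ge hxy
      h.add_le hxy hxz hyz hz
    rw [hV] at this
    omega

theorem quotient [Fintype V] {r : Setoid V} [DecidableEq (Quotient r)]
    (h : MonoStarWeightLE c w d) (hr : IsHomogeneous c r) :
    MonoStarWeightLE (fun p q : Quotient r => c p.out q.out) (fun q => ∑ x with ⟦x⟧ = q, w x)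
      d := by
  intro z S i hz hS
  rw [sum_fiberwise_eq_sum_filter]
  refine h (z := z.out) (i := i) (by simpa using hz) fun x hx => ?_
  have hx' : ⟦x⟧ ∈ S := by simpa using hx
  have hzx : ¬ r z.out x := fun e => hz (by rwa [← z.out_eq, Quotient.sound e])
  rw [hr.eq_out hzx, z.out_eq]
  exact hS _ hx'

end MonoStarWeightLE

theorem IsGallaiColoring.card_le [Fintype V] (h : IsGallaiColoring c) {s : ℕ} (hs : 2 ≤ s)
    (hstar : MonoStarWeightLE c 1 (2 * s + 1)) : Fintype.card V ≤ 5 * s + 1 := by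
  classical
  rcases subsingleton_or_nontrivial V with hV | hV
  · exact Fintype.card_le_one_iff_subsingleton.2 hV |>.trans (by omega)
  obtain ⟨r, a, b, ⟨x, y, hxy⟩, hr, hab⟩ := h.exists_isHomogeneous_setoid
  have : Nontrivial (Quotient r) := ⟨⟦x⟧, ⟦y⟧, fun e => hxy (Quotient.exact e)⟩
  have hsum := (hstar.quotient hr).sum_le_of_two_colors (a := a) (b := b) hs
    (fun _ _ => h.symm _ _) fun p q hpq => hab _ _ fun e => hpq (Quotient.out_equiv_out.1 e)
  rw [sum_fiberwise] at hsum
  simpa using hsum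

end MonoStar

section StarPlus

open Finset

variable {V C : Type*} {n : ℕ}

theorem starPlusG_zero_adj {b : Fin (n + 2)} (hb₀ : b ≠ 0) (hb : b.val ≤ n) :
    (starPlusG n).Adj 0 b :=
  ⟨hb₀.symm, .inl (.inl ⟨rfl, hb⟩)⟩

theorem starPlusG_castSucc_last_adj_last :
    (starPlusG n).Adj (Fin.last n).castSucc (Fin.last (n + 1)) :=
  ⟨Fin.castSucc_ne_last _, .inl (.inr ⟨rfl, rfl⟩)⟩

theorem starPlusG_isContained {G : SimpleGraph V} {L : Finset V} {v u w : V}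
    (hL : ∀ x ∈ L, G.Adj v x) (hcard : #L = n) (hu : u ∈ L) (hw : w ∉ L) (hwv : w ≠ v)
    (huw : G.Adj u w) : starPlusG n ⊑ G := by
  obtain ⟨m, rfl⟩ : ∃ m, n = m + 1 := Nat.exists_eq_succ_of_ne_zero (hcard ▸ card_ne_zero_of_mem hu)
  obtain ⟨e, he⟩ : ∃ e : Fin (m + 1) ≃ L, e (Fin.last m) = ⟨u, hu⟩ := by
    let e := (L.equivFinOfCardEq hcard).symm
    exact ⟨(Equiv.swap (Fin.last m) (e.symm ⟨u, hu⟩)).trans e, by simp⟩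
  let f : Fin (m + 1 + 2) → V := Fin.cons v (Fin.snoc (fun i => (e i : V)) w)
  have adj {a b : Fin (m + 1 + 2)} (hab : a ≠ b)
      (h : (a = 0 ∧ b.val ≤ m + 1) ∨ (a.val = m + 1 ∧ b.val = m + 1 + 1)) : G.Adj (f a) (f b) := by
    rcases h with ⟨rfl, hb⟩ | ⟨ha, hb⟩
    · obtain ⟨j, rfl⟩ := Fin.exists_succ_eq.2 hab.symm
      obtain ⟨i, rfl⟩ := Fin.exists_castSucc_eq.2 (show j ≠ Fin.last _ by grind)
      simpa [f] using hL _ (e i).2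
    · obtain rfl : a = (Fin.last m).castSucc.succ := Fin.ext ha
      obtain rfl : b = (Fin.last (m + 1)).succ := Fin.ext hb
      simpa [f, he] using huw
  have f_injective : f.Injective := by
    refine Fin.cons_injective_iff.2 ⟨?_, Fin.snoc_injective_iff.2 ⟨?_, ?_⟩⟩
    · rintro ⟨j, hj⟩
      induction j using Fin.lastCases with
      | last => exact hwv (by simpa using hj)
      | cast i => exact (hL _ (e i).2).ne (by simpa using hj.symm)
    · exact Subtype.val_injective.comp e.injective
    · rintro ⟨i, rfl⟩
      exact hw (e i).2
  exact ⟨⟨f, fun {a b} h => h.2.elim (adj h.1) fun h' => (adj h.1.symm h').symm⟩, f_injective⟩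

theorem mem_and_card_eq_of_starPlusG_free {G : SimpleGraph V} (hG : (starPlusG n).Free G)
    (hn : 0 < n) {L : Finset V} {v u w : V} (hL : ∀ x ∈ L, G.Adj v x) (hcard : n ≤ #L) (hu : u ∈ L)
    (hwv : w ≠ v) (huw : G.Adj u w) : w ∈ L ∧ #L = n := by
  classical
  have card_lt {L' : Finset V} (hL' : L' ⊆ L) (hu' : u ∈ L') (hw : w ∉ L') : #L' < n := by
    by_contra! hle
    obtain ⟨M, huM, hML', hM⟩ := exists_subsuperset_card_eq (singleton_subset_iff.2 hu') (by simpa)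
      hle
    exact hG (starPlusG_isContained (fun x hx => hL x (hL' (hML' hx))) hM
      (singleton_subset_iff.1 huM) (fun hwM => hw (hML' hwM)) hwv huw)
  have hw : w ∈ L := by
    by_contra hw
    exact hcard.not_gt (card_lt Subset.rfl hu hw)
  have := card_lt (erase_subset w L) (mem_erase.2 ⟨huw.ne, hu⟩) (notMem_erase w L)
  rw [card_erase_of_mem hw] at this
  exact ⟨hw, by omega⟩

namespace IsGallaiColoring

variable {c : V → V → C} (h : IsGallaiColoring c) (hn : 0 < n)
  (hfree : ∀ i, (starPlusG n).Free (colorGraph c i)) {v : V} {i : C} {N : Finset V}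
  (hN : ∀ x, x ∈ N ↔ (colorGraph c i).Adj v x) (hcard : n ≤ #N)
include h hn hfree hN hcard

theorem eq_of_notMem {x w : V} (hx : x ∈ N) (hw : w ∉ N) (hwv : w ≠ v) : c w x = c v w := by
  have hvx := (hN x).1 hx
  have hxw : x ≠ w := fun e => hw (e ▸ hx)
  have hi : c x w ≠ i := fun e => hw
    (mem_and_card_eq_of_starPlusG_free (hfree i) hn (fun y hy => (hN y).1 hy) hcard hx hwv
      (h.colorGraph_adj.2 ⟨hxw, e⟩)).1
  rw [hN, h.colorGraph_adj] at hw
  rw [h.colorGraph_adj] at hvx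
  have := h.eq_or_eq_or_eq hvx.1 hxw hwv.symm
  rw [h.symm w x]
  grind

theorem color_ne_of_notMem {w w' : V} (hw : w ∉ N) (hw' : w' ∉ N) (hwv : w ≠ v) (hw'v : w' ≠ v)
    (hww' : w ≠ w') : c v w ≠ c v w' := by
  intro e
  obtain ⟨u, hu⟩ := card_pos.1 (hn.trans_le hcard)
  have adj {y z : V} (hy : y ∈ N) (hz : z ∉ N) (hzv : z ≠ v) (hzw : c v z = c v w) :
      (colorGraph c (c v w)).Adj z y :=
    h.colorGraph_adj.2
      ⟨fun e => hz (e ▸ hy), (h.eq_of_notMem hn hfree hN hcard hy hz hzv).trans hzw⟩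
  exact hw' (mem_and_card_eq_of_starPlusG_free (hfree (c v w)) hn
    (fun y hy => adj hy hw hwv rfl) hcard hu hww'.symm (adj hu hw' hw'v e.symm).symm).1

theorem card_le_card_add_card [Fintype V] {K : Finset C} (hK : ∀ x y, x ≠ y → c x y ∈ K) :
    Fintype.card V ≤ #N + #K := by
  classical
  obtain ⟨u, hu⟩ := card_pos.1 (hn.trans_le hcard)
  obtain ⟨hvu, rfl⟩ := h.colorGraph_adj.1 ((hN u).1 hu)
  have notMem {w : V} (hw : w ∈ (insert v N)ᶜ) : w ≠ v ∧ w ∉ N := by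
    simpa only [mem_compl, mem_insert, not_or] using hw
  have hout : #(insert v N)ᶜ ≤ #(K.erase (c v u)) := by
    refine card_le_card_of_injOn (c v) (fun w hw => ?_) fun w hw w' hw' e => ?_
    · obtain ⟨hwv, hwN⟩ := notMem hw
      rw [hN, h.colorGraph_adj] at hwN
      exact mem_erase.2 ⟨fun e => hwN ⟨hwv.symm, e⟩, hK v w hwv.symm⟩
    · by_contra hww'
      exact h.color_ne_of_notMem hn hfree hN hcard (notMem hw).2 (notMem hw').2 (notMem hw).1
        (notMem hw').1 hww' e
  have := card_erase_add_one (hK v u hvu)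
  have := card_insert_le v N
  have := card_add_card_compl (insert v N)
  omega

theorem ne_of_card_ne (hNn : #N ≠ n) {x y : V} (hxv : x ≠ v) (hyv : y ≠ v) (hxy : x ≠ y) :
    c x y ≠ i := by
  intro e
  have notMem {x y : V} (hyv : y ≠ v) (hxy : (colorGraph c i).Adj x y) : x ∉ N := fun hx =>
    hNn (mem_and_card_eq_of_starPlusG_free (hfree i) hn (fun z hz => (hN z).1 hz) hcard hx
      hyv hxy).2
  have hx : x ∉ N := notMem hyv (h.colorGraph_adj.2 ⟨hxy, e⟩)
  have hy : y ∉ N := notMem hxv (h.colorGraph_adj.2 ⟨hxy, e⟩).symm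
  have := h.color_ne_of_notMem hn hfree hN hcard hx hy hxv hyv hxy
  rw [hN, h.colorGraph_adj] at hx hy
  have := h.eq_or_eq_or_eq hxv.symm hxy hyv.symm
  grind

end IsGallaiColoring

section PeelVertex

variable {c : V → V → C} [Fintype V] {K : Finset C}

theorem card_compl_singleton_add_one [DecidableEq V] (v : V) :
    Fintype.card ({v}ᶜ : Set V) + 1 = Fintype.card V := by
  rw [Fintype.card_compl_set, Set.card_singleton, Nat.sub_add_cancel (Fintype.card_pos_iff.2 ⟨v⟩)]

theorem IsGallaiColoring.card_le_or_exists_ssubset (h : IsGallaiColoring c) (hn : 0 < n)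
    (hfree : ∀ i, (starPlusG n).Free (colorGraph c i)) (hK : ∀ x y, x ≠ y → c x y ∈ K)
    (hstar : ¬ MonoStarWeightLE c 1 (n - 1)) : Fintype.card V ≤ n + #K ∨
      ∃ v, ∃ K' ⊂ K, ∀ x y : ({v}ᶜ : Set V), x ≠ y → c x y ∈ K' := by
  classical
  obtain ⟨v, S, i, hvS, hS, hcard⟩ : ∃ v S i, v ∉ S ∧ (∀ x ∈ S, c v x = i) ∧ n ≤ #S := by
    unfold MonoStarWeightLE at hstar
    push Not at hstar
    obtain ⟨v, S, i, hvS, hS, hlt⟩ := hstar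
    exact ⟨v, S, i, hvS, hS, by simpa using Nat.le_of_pred_lt hlt⟩
  let N : Finset V := {x | (colorGraph c i).Adj v x}
  have hN (x) : x ∈ N ↔ (colorGraph c i).Adj v x := by simp [N]
  have hSN : S ⊆ N := fun x hx =>
    (hN x).2 (h.colorGraph_adj.2 ⟨fun e => hvS (e ▸ hx), hS x hx⟩)
  have hcardN : n ≤ #N := hcard.trans (card_le_card hSN)
  obtain ⟨u, hu⟩ := card_pos.1 (hn.trans_le hcardN)
  obtain ⟨hvu, hvui⟩ := h.colorGraph_adj.1 ((hN u).1 hu)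
  by_cases hNn : #N = n
  · exact .inl (hNn ▸ h.card_le_card_add_card hn hfree hN hcardN hK)
  · refine .inr ⟨v, K.erase i, erase_ssubset (hvui ▸ hK v u hvu), fun x y hxy => ?_⟩
    have hxy := Subtype.val_injective.ne hxy
    exact mem_erase.2 ⟨h.ne_of_card_ne hn hfree hN hcardN hNn x.2 y.2 hxy, hK x y hxy⟩

theorem IsGallaiColoring.card_add_three_le (h : IsGallaiColoring c) (hn : 3 ≤ n)
    (hfree : ∀ i, (starPlusG n).Free (colorGraph c i)) (hK : ∀ x y, x ≠ y → c x y ∈ K)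
    (hK2 : #K ≤ 2) : Fintype.card V + 3 ≤ 2 * n + #K := by
  classical
  induction K using Finset.strongInduction generalizing V with
  | _ K ih =>
  by_cases hstar : MonoStarWeightLE c 1 (n - 1)
  · rcases isEmpty_or_nonempty V with hV | ⟨⟨v⟩⟩
    · have := Fintype.card_eq_zero (α := V)
      omega
    have : Fintype.card V ≤ 1 + #K * (n - 1) := by
      simpa using hstar.sum_le_add_card_mul (z := v) fun x hx => hK v x hx.symm
    interval_cases #K <;> omega
  rcases h.card_le_or_exists_ssubset (by omega) hfree hK hstar with hV | ⟨v, K', hKK', hK'⟩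
  · omega
  have := card_lt_card hKK'
  have hrestr : IsGallaiColoring fun x y : ({v}ᶜ : Set V) => c x y :=
    h.comp Subtype.val_injective
  have hfree' (i) := free_colorGraph_comp (W := ({v}ᶜ : Set V)) Subtype.val_injective (hfree i)
  have := ih K' hKK' hrestr hfree' hK' (by omega)
  have := card_compl_singleton_add_one v
  omega

theorem IsGallaiColoring.card_add_two_le (h : IsGallaiColoring c) {s : ℕ} (hs : 3 ≤ s)
    (hfree : ∀ i, (starPlusG (2 * s + 2)).Free (colorGraph c i)) (hK : ∀ x y, x ≠ y → c x y ∈ K)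
    (hK3 : 3 ≤ #K) : Fintype.card V + 2 ≤ 5 * s + #K := by
  classical
  induction K using Finset.strongInduction generalizing V with
  | _ K ih =>
  by_cases hstar : MonoStarWeightLE c 1 (2 * s + 1)
  · have := h.card_le (by omega) hstar
    omega
  rcases h.card_le_or_exists_ssubset (by omega) hfree hK hstar with hV | ⟨v, K', hKK', hK'⟩
  · omega
  have := card_lt_card hKK'
  have hrestr : IsGallaiColoring fun x y : ({v}ᶜ : Set V) => c x y :=
    h.comp Subtype.val_injective
  have hfree' (i) := free_colorGraph_comp (W := ({v}ᶜ : Set V)) Subtype.val_injective (hfree i)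
  have := ih K' hKK' hrestr hfree' hK'
  have := hrestr.card_add_three_le (by omega) hfree' hK'
  have := card_compl_singleton_add_one v
  omega

end PeelVertex
end StarPlus

section GallaiAvoids

variable {V W C D α : Type*} {H : SimpleGraph α}

/-- The complete graph on `V` has a Gallai coloring with colors in `C` and no monochromatic copy
of `H`. For finite `V` and `C` this says `Fintype.card V < GR_k(H)` with `k = Fintype.card C`. -/
def GallaiAvoids (V C : Type*) (H : SimpleGraph α) : Prop :=
  ∃ c : V → V → C, IsGallaiColoring c ∧ ∀ i, H.Free (colorGraph c i)

theorem isGallaiColoring_iff {k : ℕ} {c : V → V → Fin k} :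
    IsGallaiColoring c ↔ (∀ x y, c x y = c y x) ∧ NoRainbowTriangle ⊤ c := by
  refine ⟨fun h => ⟨h.symm, ?_⟩, fun ⟨hc, h⟩ => ⟨hc, fun {x y z} hxy hyz hxz => ?_⟩⟩
  · rintro ⟨x, y, z, hxy, hyz, hxz, h₁, h₂, h₃⟩
    have := h.eq_or_eq_or_eq hxy hyz hxz
    tauto
  · by_contra! hne
    exact h ⟨x, y, z, hxy, hyz, hxz, hne⟩

theorem IsGallaiColoring.isMonoCopy_iff {k : ℕ} {c : V → V → Fin k} (h : IsGallaiColoring c) :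
    IsMonoCopy ⊤ c H ↔ ∃ i, H ⊑ colorGraph c i := by
  constructor
  · rintro ⟨f, i, hf, hfc⟩
    exact ⟨i, ⟨⟨f, fun {a b} hab => h.colorGraph_adj.2 (hfc a b hab)⟩, hf⟩⟩
  · rintro ⟨i, ⟨f⟩⟩
    exact ⟨f, i, f.injective, fun a b hab => h.colorGraph_adj.1 (f.toHom.map_adj hab)⟩

theorem not_gallaiAvoids_iff {k : ℕ} : ¬ GallaiAvoids V (Fin k) H ↔
    ∀ c : V → V → Fin k, (∀ x y, c x y = c y x) → NoRainbowTriangle ⊤ c → IsMonoCopy ⊤ c H := by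
  unfold GallaiAvoids Free
  push Not
  refine forall_congr' fun c => ?_
  rw [← and_imp, ← isGallaiColoring_iff]
  exact forall_congr' fun h => h.isMonoCopy_iff.symm

section Map₂

variable {c : V → V → C}

-- `Option.map₂ c` extends `c` by a vertex `none` joined to all others in a new color `none`.
theorem IsGallaiColoring.map₂ (hc : IsGallaiColoring c) :
    IsGallaiColoring (Option.map₂ c) where
  symm := by
    rintro (_ | x) (_ | y) <;> simp [hc.symm]
  eq_or_eq_or_eq := by
    rintro (_ | x) (_ | y) (_ | z) hxy hyz hxz
    case some.some.some =>
      simpa using hc.eq_or_eq_or_eq (Option.some_injective V |>.ne_iff.1 hxy)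
        (Option.some_injective V |>.ne_iff.1 hyz) (Option.some_injective V |>.ne_iff.1 hxz)
    all_goals simp

theorem IsGallaiColoring.map₂_some_free (hc : IsGallaiColoring c) {i : C}
    (hH : H.Free (colorGraph c i)) (hiso : ∀ a, ∃ b, H.Adj a b) :
    H.Free (colorGraph (Option.map₂ c) (some i)) := by
  rintro ⟨f⟩
  have color_eq {a b : α} (hab : H.Adj a b) : Option.map₂ c (f a) (f b) = some i :=
    (hc.map₂.colorGraph_adj.1 (f.toHom.map_adj hab)).2
  have exists_eq (a : α) : ∃ x, f a = some x := by
    obtain ⟨b, hab⟩ := hiso a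
    obtain ⟨x, -, hx, -⟩ := Option.map₂_eq_some_iff.1 (color_eq hab)
    exact ⟨x, hx⟩
  choose g hg using exists_eq
  have g_injective : g.Injective := fun a b hab =>
    f.injective ((hg a).trans (hab ▸ (hg b).symm))
  refine hH ⟨⟨⟨g, fun {a b} hab => hc.colorGraph_adj.2 ⟨g_injective.ne hab.ne, ?_⟩⟩, g_injective⟩⟩
  simpa [hg] using color_eq hab

theorem IsGallaiColoring.map₂_none_free (hc : IsGallaiColoring c)
    (hedges : ∃ a b a' b', H.Adj a b ∧ H.Adj a' b' ∧ a ≠ a' ∧ a ≠ b' ∧ b ≠ a' ∧ b ≠ b') :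
    H.Free (colorGraph (Option.map₂ c) none) := by
  rintro ⟨f⟩
  have eq_none {a b : α} (hab : H.Adj a b) : f a = none ∨ f b = none :=
    Option.map₂_eq_none_iff.1 (hc.map₂.colorGraph_adj.1 (f.toHom.map_adj hab)).2
  have eq_of_eq_none {a b : α} (ha : f a = none) (hb : f b = none) : a = b :=
    f.injective (ha.trans hb.symm)
  obtain ⟨a, b, a', b', hab, hab', h₁, h₂, h₃, h₄⟩ := hedges
  rcases eq_none hab with h | h <;> rcases eq_none hab' with h' | h'
  exacts [h₁ (eq_of_eq_none h h'), h₂ (eq_of_eq_none h h'), h₃ (eq_of_eq_none h h'),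
    h₄ (eq_of_eq_none h h')]

end Map₂

namespace GallaiAvoids

theorem of_embedding (e : W ↪ V) (g : C ≃ D) (h : GallaiAvoids V C H) : GallaiAvoids W D H := by
  obtain ⟨c, hc, hH⟩ := h
  have colorGraph_eq (i : D) : colorGraph (fun x y => g (c x y)) i = colorGraph c (g.symm i) := by
    simp [colorGraph, g.eq_symm_apply]
  have hgc : IsGallaiColoring fun x y => g (c x y) :=
    ⟨fun x y => congrArg g (hc.symm x y), fun hxy hyz hxz => by
      simpa using hc.eq_or_eq_or_eq hxy hyz hxz⟩
  exact ⟨_, hgc.comp e.injective, fun i =>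
    free_colorGraph_comp e.injective (colorGraph_eq i ▸ hH (g.symm i))⟩

theorem option (hiso : ∀ a, ∃ b, H.Adj a b)
    (hedges : ∃ a b a' b', H.Adj a b ∧ H.Adj a' b' ∧ a ≠ a' ∧ a ≠ b' ∧ b ≠ a' ∧ b ≠ b')
    (h : GallaiAvoids V C H) : GallaiAvoids (Option V) (Option C) H := by
  obtain ⟨c, hc, hH⟩ := h
  refine ⟨Option.map₂ c, hc.map₂, ?_⟩
  rintro (_ | i)
  · exact hc.map₂_none_free hedges
  · exact hc.map₂_some_free (hH i) hiso

theorem fin_add (hiso : ∀ a, ∃ b, H.Adj a b)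
    (hedges : ∃ a b a' b', H.Adj a b ∧ H.Adj a' b' ∧ a ≠ a' ∧ a ≠ b' ∧ b ≠ a' ∧ b ≠ b') {N k : ℕ}
    (h : GallaiAvoids (Fin N) (Fin k) H) (m : ℕ) :
    GallaiAvoids (Fin (N + m)) (Fin (k + m)) H := by
  induction m with
  | zero => exact h
  | succ m ih =>
    exact (ih.option hiso hedges).of_embedding (finSuccEquiv _).toEmbedding (finSuccEquiv _).symm

theorem gallaiRamsey_eq {N k : ℕ} (h : GallaiAvoids (Fin N) (Fin k) H)
    (hN : ¬ GallaiAvoids (Fin (N + 1)) (Fin k) H) : GallaiRamsey k H = N + 1 := by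
  unfold GallaiRamsey
  simp_rw [← not_gallaiAvoids_iff]
  refine le_antisymm (Nat.sInf_le hN) (le_csInf ⟨_, hN⟩ fun M hM => ?_)
  by_contra! hlt
  exact hM (h.of_embedding (Fin.castLEEmb (Nat.le_of_lt_succ hlt)) (Equiv.refl _))

end GallaiAvoids
end GallaiAvoids

section Pentagon

open Finset

variable {V C : Type*} {n : ℕ}

theorem MonoStarWeightLE.starPlusG_free {c : V → V → C} (hc : IsGallaiColoring c) {d : ℕ}
    (h : MonoStarWeightLE c 1 d) (hd : d < n) (i : C) : (starPlusG n).Free (colorGraph c i) := by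
  rintro ⟨f⟩
  let leaf : Fin n ↪ V := ((Fin.succEmb n).trans Fin.castSuccEmb).trans f.toEmbedding
  have hleaf (j : Fin n) : (colorGraph c i).Adj (f 0) (leaf j) :=
    f.toHom.map_adj (starPlusG_zero_adj (Fin.castSucc_ne_zero_iff.2 j.succ_ne_zero) j.succ.is_le)
  have : n ≤ d := by
    simpa using h (z := f 0) (S := univ.map leaf) (i := i) (by simpa using fun j => (hleaf j).ne')
      (by simpa using fun j => (hc.colorGraph_adj.1 (hleaf j)).2)
  omega

/-- The blow-up of the pentagon coloring of `K₅`: vertices over the same point of `ZMod 5` are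
joined in color `2`, those over adjacent points in color `0`, and all others in color `1`. -/
def pentagonColoring (p : V → ZMod 5) (x y : V) : Fin 3 :=
  if p x - p y = 0 then 2 else if p x - p y = 1 ∨ p x - p y = -1 then 0 else 1

theorem isGallaiColoring_pentagonColoring (p : V → ZMod 5) :
    IsGallaiColoring (pentagonColoring p) := by
  have symm : ∀ s t : ZMod 5, pentagonColoring id s t = pentagonColoring id t s := by decide
  have triangle : ∀ s t u : ZMod 5, pentagonColoring id s t = pentagonColoring id t u ∨
      pentagonColoring id t u = pentagonColoring id s u ∨
      pentagonColoring id s t = pentagonColoring id s u := by decide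
  exact ⟨fun x y => symm (p x) (p y), fun {x y z} _ _ _ => triangle (p x) (p y) (p z)⟩

-- The vertex `none` makes one part larger than the other four by one vertex.
theorem monoStarWeightLE_pentagonColoring (s : ℕ) :
    MonoStarWeightLE (pentagonColoring fun x : Option (ZMod 5 × Fin s) => x.elim 0 Prod.fst) 1
      (2 * s + 1) := by
  intro z S i _ hS
  let P : Finset (ZMod 5) := {t | pentagonColoring id (z.elim 0 Prod.fst) t = i}
  have card_P : #P ≤ 2 := by
    have : ∀ t i, #{u | pentagonColoring (id : ZMod 5 → ZMod 5) t u = i} ≤ 2 := by decide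
    exact this _ i
  have subset : S ⊆ insertNone (P ×ˢ univ) := by
    rintro (_ | x) hx
    · simp
    · exact some_mem_insertNone.2
        (mem_product.2 ⟨mem_filter.2 ⟨mem_univ _, hS _ hx⟩, mem_univ _⟩)
  have hcard : #S ≤ #P * s + 1 := by simpa using card_le_card subset
  have : #P * s ≤ 2 * s := Nat.mul_le_mul_right s card_P
  simp only [Pi.one_apply, sum_const, smul_eq_mul, mul_one]
  omega

theorem exists_starPlusG_adj (hn : 0 < n) (a : Fin (n + 2)) : ∃ b, (starPlusG n).Adj a b := by
  cases a using Fin.lastCases with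
  | last => exact ⟨_, starPlusG_castSucc_last_adj_last.symm⟩
  | cast a =>
    rcases eq_or_ne a 0 with rfl | ha
    · exact ⟨1, starPlusG_zero_adj one_ne_zero (by simpa using Nat.succ_le_of_lt hn)⟩
    · exact ⟨0, (starPlusG_zero_adj (Fin.castSucc_ne_zero_iff.2 ha) a.is_le).symm⟩

theorem exists_disjoint_starPlusG_adj (hn : 2 ≤ n) : ∃ a b a' b', (starPlusG n).Adj a b ∧
    (starPlusG n).Adj a' b' ∧ a ≠ a' ∧ a ≠ b' ∧ b ≠ a' ∧ b ≠ b' := by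
  refine ⟨0, 1, _, _, starPlusG_zero_adj one_ne_zero (by rw [Fin.val_one]; omega),
    starPlusG_castSucc_last_adj_last, ?_⟩
  simp only [ne_eq, Fin.ext_iff, Fin.val_zero, Fin.val_one, Fin.val_castSucc, Fin.val_last]
  omega

theorem gallaiAvoids_starPlusG (s m : ℕ) :
    GallaiAvoids (Fin (5 * s + 1 + m)) (Fin (3 + m)) (starPlusG (2 * s + 2)) := by
  have hc := isGallaiColoring_pentagonColoring fun x : Option (ZMod 5 × Fin s) => x.elim 0 Prod.fst
  have hfree := (monoStarWeightLE_pentagonColoring s).starPlusG_free hc (Nat.lt_succ_self _)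
  have e : Fin (5 * s + 1) ≃ Option (ZMod 5 × Fin s) :=
    Fintype.equivOfCardEq (by simp [ZMod.card])
  exact (GallaiAvoids.of_embedding e.toEmbedding (Equiv.refl _) ⟨_, hc, hfree⟩).fin_add
    (exists_starPlusG_adj (by omega)) (exists_disjoint_starPlusG_adj (by omega)) m

end Pentagon

theorem starPlus_gallai_upper_general (k n : ℕ) (hk : 3 ≤ k) (hn : 8 ≤ n) (hne : n % 2 = 0) :
    (∀ c : Fin (5 * n / 2 + k - 6) → Fin (5 * n / 2 + k - 6) → Fin k,
      (∀ x y, c x y = c y x) →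
      NoRainbowTriangle (⊤ : SimpleGraph (Fin (5 * n / 2 + k - 6))) c →
      IsMonoCopy (⊤ : SimpleGraph (Fin (5 * n / 2 + k - 6))) c (starPlusG n)) ∧
    GallaiRamsey k (starPlusG n) = 5 * n / 2 + k - 6 := by
  obtain ⟨s, rfl⟩ : ∃ s, n = 2 * s + 2 := ⟨n / 2 - 1, by omega⟩
  obtain ⟨m, rfl⟩ := Nat.exists_eq_add_of_le hk
  have hN : 5 * (2 * s + 2) / 2 + (3 + m) - 6 = 5 * s + 1 + m + 1 := by omega
  have hupper : ¬ GallaiAvoids (Fin (5 * s + 1 + m + 1)) (Fin (3 + m)) (starPlusG (2 * s + 2)) := by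
    rintro ⟨c, hc, hfree⟩
    have := hc.card_add_two_le (by omega) hfree (K := Finset.univ) (by simp) (by simp)
    simp only [Fintype.card_fin, Finset.card_univ] at this
    omega
  rw [hN]
  exact ⟨not_gallaiAvoids_iff.1 hupper, (gallaiAvoids_starPlusG s m).gallaiRamsey_eq hupper⟩

/-- For every `k ≥ 3` and even `n ≥ 12`, every Gallai `k`-coloring of the
complete graph on `5n/2 + k − 6` vertices contains a monochromatic copy of
`K⁺_{1,n}`; consequently `GR_k(K⁺_{1,n}) = 5n/2 + k − 6`. -/
theorem starPlus_gallai_upper (k n : ℕ) (hk : 3 ≤ k) (hn : 12 ≤ n) (hne : n % 2 = 0) :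
    (∀ c : Fin (5 * n / 2 + k - 6) → Fin (5 * n / 2 + k - 6) → Fin k,
      (∀ x y, c x y = c y x) →
      NoRainbowTriangle (⊤ : SimpleGraph (Fin (5 * n / 2 + k - 6))) c →
      IsMonoCopy (⊤ : SimpleGraph (Fin (5 * n / 2 + k - 6))) c (starPlusG n)) ∧
    GallaiRamsey k (starPlusG n) = 5 * n / 2 + k - 6 :=
  starPlus_gallai_upper_general k n hk (by omega) hne
end

section
/- For every integer k ≥ 3 and every even integer n ≥ 12, every edge k-coloring with no rainbow triangle of the graph obtained from the complete graph on 5n/2 − 3 vertices by deleting one edge contains a monochromatic copy of the star K_{1,n}. Since GR_k(K_{1,n}) = 5n/2 − 3, this shows that K_{1,n} is not Gallai-Ramsey-full (although K_{1,n} is Ramsey-full for even n). -/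
open SimpleGraph

/-! A coloring without rainbow triangles admits a Gallai partition, whose parts are separated by
edges of only two colors `r` and `b`. The proof adds one vertex at a time, and the last vertex need
not be adjacent to all others, so a partition also exists when one edge `uv` is missing. Put
`n = 2 * m` and suppose there is no monochromatic `K_{1,n}`. Every part has a vertex other than `u`
and `v`, as otherwise a vertex of the part would have too many neighbors of color `r` or `b`. These
representatives see every other part in one color, so the part sizes weight the vertices of a
2-colored complete graph in which all monochromatic neighborhoods weigh at most `2 * m - 1`. At
total weight at least `5 * m - 3` all weights are at least `m - 1`, all monochromatic degrees are at
most `2`, and there are at most five parts. With at most four parts, two monochromatic neighborhoods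
cover everything; with five parts any two parts lie in a common one. Either way the total is at most
`5 * m - 4`, and a blow-up of the 2-colored pentagon attains this.

For two colors, a coloring of the complete graph on `2 * n - 1` vertices without monochromatic
`K_{1,n}` would be regular of odd degree on an odd number of vertices; deleting one edge removes
this parity obstruction.
-/

open scoped Finset

section MonochromaticStars

variable {V : Type*} {k : ℕ} {G : SimpleGraph V} {c : V → V → Fin k} [Fintype V]

open Classical in
/-- The neighbors of `x` in `G` along edges of color `i`. -/
noncomputable def colorNeighbors (G : SimpleGraph V) (c : V → V → Fin k) (x : V) (i : Fin k) :
    Finset V :=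
  {y | G.Adj x y ∧ c x y = i}

@[simp]
theorem mem_colorNeighbors {x y : V} {i : Fin k} :
    y ∈ colorNeighbors G c x i ↔ G.Adj x y ∧ c x y = i := by
  simp [colorNeighbors]

theorem isMonoCopy_starG_iff (hs : ∀ x y, c x y = c y x) {n : ℕ} :
    IsMonoCopy G c (starG n) ↔ ∃ x i, n ≤ #(colorNeighbors G c x i) := by
  constructor
  · rintro ⟨f, i, hf, hfi⟩
    have hmem : ∀ j : Fin n, f j.succ ∈ colorNeighbors G c (f 0) i := fun j =>
      mem_colorNeighbors.2 (hfi 0 j.succ (by simp [starG, (Fin.succ_ne_zero j).symm]))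
    refine ⟨f 0, i, ?_⟩
    simpa using Finset.card_le_card_of_injOn (s := (Finset.univ : Finset (Fin n)))
      (fun j => f j.succ) (fun j _ => hmem j) (hf.comp (Fin.succ_injective n)).injOn
  · rintro ⟨x, i, hn⟩
    obtain ⟨leaf⟩ : Nonempty (Fin n ↪ colorNeighbors G c x i) :=
      Function.Embedding.nonempty_of_card_le (by simpa using hn)
    have hleaf : ∀ j, G.Adj x (leaf j) ∧ c x (leaf j) = i := fun j =>
      mem_colorNeighbors.1 (leaf j).2
    refine ⟨Fin.cons x fun j => (leaf j : V), i, Fin.cons_injective_iff.2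
      ⟨?_, Subtype.val_injective.comp leaf.injective⟩, ?_⟩
    · rintro ⟨j, hj⟩
      exact (hleaf j).1.ne hj.symm
    · intro a b hab
      simp only [starG, SimpleGraph.fromRel_adj] at hab
      obtain ⟨hne, rfl | rfl⟩ := hab
      · obtain ⟨j, rfl⟩ := Fin.exists_succ_eq.2 hne.symm
        simpa using hleaf j
      · obtain ⟨j, rfl⟩ := Fin.exists_succ_eq.2 hne
        simpa [hs (leaf j : V) x, G.adj_comm (leaf j : V) x] using hleaf j

theorem not_isMonoCopy_starG_iff (hs : ∀ x y, c x y = c y x) {n : ℕ} :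
    ¬ IsMonoCopy G c (starG n) ↔ ∀ x i, #(colorNeighbors G c x i) < n := by
  simp [isMonoCopy_starG_iff hs]

end MonochromaticStars

section GallaiSplit

variable {V : Type*} {k : ℕ} {G : SimpleGraph V} {c : V → V → Fin k} {W : Set V}
  {P : Set (Fin k)} {v x y z : V}

theorem NoRainbowTriangle.color_eq (hr : NoRainbowTriangle G c) (hxy : G.Adj x y)
    (hyz : G.Adj y z) (hxz : G.Adj x z) (hy : c x y ≠ c y z) (hz : c x z ≠ c y z) :
    c x y = c x z := by
  by_contra h
  exact hr ⟨x, y, z, hxy, hyz, hxz, hy, hz.symm, h⟩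

/-- The edges of `G` inside `W` whose color avoids the palette `P`. Its connected components
are the parts of the Gallai partitions below. -/
def avoidingGraph (G : SimpleGraph V) (c : V → V → Fin k) (W : Set V) (P : Set (Fin k)) :
    SimpleGraph V :=
  SimpleGraph.fromRel fun x y => x ∈ W ∧ y ∈ W ∧ G.Adj x y ∧ c x y ∉ P

theorem avoidingGraph_adj (hs : ∀ x y, c x y = c y x) :
    (avoidingGraph G c W P).Adj x y ↔ x ∈ W ∧ y ∈ W ∧ G.Adj x y ∧ c x y ∉ P := by
  simp only [avoidingGraph, SimpleGraph.fromRel_adj, hs y x, G.adj_comm y x]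
  have := G.ne_of_adj (a := x) (b := y)
  tauto

theorem color_mem_of_not_reachable (hs : ∀ x y, c x y = c y x) (hx : x ∈ W) (hy : y ∈ W)
    (hxy : G.Adj x y) (h : ¬ (avoidingGraph G c W P).Reachable x y) : c x y ∈ P := by
  by_contra hP
  exact h ((avoidingGraph_adj hs).2 ⟨hx, hy, hxy, hP⟩).reachable

theorem ne_of_not_reachable {H : SimpleGraph V} (h : ¬ H.Reachable x y) : x ≠ y := by
  rintro rfl
  exact h (Reachable.refl x)

theorem color_eq_of_reachable (hs : ∀ x y, c x y = c y x) (hr : NoRainbowTriangle G c)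
    (hx : x ∈ W) (hxW : ∀ t ∈ W, x ≠ t → G.Adj x t)
    (hyz : (avoidingGraph G c W P).Reachable y z)
    (hxy : ¬ (avoidingGraph G c W P).Reachable x y) : c x y = c x z := by
  obtain ⟨walk⟩ := hyz
  induction walk with
  | nil => rfl
  | @cons y t z hyt _ ih =>
    have hxt : ¬ (avoidingGraph G c W P).Reachable x t := fun h =>
      hxy (h.trans hyt.symm.reachable)
    obtain ⟨hy, ht, hadj, hP⟩ := (avoidingGraph_adj hs).1 hyt
    have hxy' := hxW y hy (ne_of_not_reachable hxy)
    have hxt' := hxW t ht (ne_of_not_reachable hxt)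
    rw [← ih hxt]
    exact hr.color_eq hxy' hadj hxt'
      (ne_of_mem_of_not_mem (color_mem_of_not_reachable hs hx hy hxy' hxy) hP)
      (ne_of_mem_of_not_mem (color_mem_of_not_reachable hs hx ht hxt' hxt) hP)

theorem exists_reachable_adj_of_reachable_insert (hs : ∀ x y, c x y = c y x) (hx : x ∈ W)
    (hv : v ∉ W) (h : (avoidingGraph G c (insert v W) P).Reachable x v) :
    ∃ y ∈ W, (avoidingGraph G c W P).Reachable x y ∧ G.Adj v y ∧ c v y ∉ P := by
  generalize hU : insert v W = U at h
  obtain ⟨walk⟩ := h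
  induction walk with
  | nil => exact absurd hx hv
  | @cons x t v hxt _ ih =>
    obtain ⟨-, ht, hadj, hP⟩ := (avoidingGraph_adj hs).1 hxt
    rw [← hU] at ht
    rcases ht with rfl | ht
    · exact ⟨x, hx, Reachable.refl x, hadj.symm, hs x t ▸ hP⟩
    · obtain ⟨y, hy, hty, hvy⟩ := ih ht hv hU
      exact ⟨y, hy, ((avoidingGraph_adj hs).2 ⟨hx, ht, hadj, hP⟩).reachable.trans hty, hvy⟩

/-- The set `W` splits into at least two parts when two suitable colors are removed: a Gallai
partition of the coloring on `W`. -/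
def SplitByTwoColors (G : SimpleGraph V) (c : V → V → Fin k) (W : Set V) : Prop :=
  ∃ p q, ∃ x ∈ W, ∃ y ∈ W, ¬ (avoidingGraph G c W {p, q}).Reachable x y

/-- Each part of the partition of `W` into components of `avoidingGraph G c W P` is joined to `v`
by an edge whose color avoids `P`, so that adding `v` merges all parts into one. -/
def MeetsEveryPart (G : SimpleGraph V) (c : V → V → Fin k) (W : Set V) (P : Set (Fin k))
    (v : V) : Prop :=
  ∀ x ∈ W, ∃ y ∈ W, (avoidingGraph G c W P).Reachable x y ∧ G.Adj v y ∧ c v y ∉ P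

theorem MeetsEveryPart.exists_not_reachable (hv : MeetsEveryPart G c W P v) (hx : x ∈ W)
    (hy : y ∈ W) (hxy : ¬ (avoidingGraph G c W P).Reachable x y) (z : V) :
    ∃ t ∈ W, ¬ (avoidingGraph G c W P).Reachable z t ∧ G.Adj v t ∧ c v t ∉ P := by
  obtain ⟨s, hsW, hzs⟩ : ∃ s ∈ W, ¬ (avoidingGraph G c W P).Reachable z s := by
    by_cases hzx : (avoidingGraph G c W P).Reachable z x
    · exact ⟨y, hy, fun hzy => hxy (hzx.symm.trans hzy)⟩
    · exact ⟨x, hx, hzx⟩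
  obtain ⟨t, ht, hst, hvt⟩ := hv s hsW
  exact ⟨t, ht, fun hzt => hzs (hzt.trans hst.symm), hvt⟩

theorem color_eq_of_not_reachable (hs : ∀ x y, c x y = c y x) (hr : NoRainbowTriangle G c)
    (hW : G.IsClique W) (hx : x ∈ W) (hy : y ∈ W)
    (hxy : ¬ (avoidingGraph G c W P).Reachable x y) (hvx : G.Adj v x) (hvy : G.Adj v y)
    (hPx : c v x ∉ P) (hPy : c v y ∉ P) : c v x = c v y := by
  have hadj := hW hx hy (ne_of_not_reachable hxy)
  have hP := color_mem_of_not_reachable hs hx hy hadj hxy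
  exact hr.color_eq hvx hadj hvy (ne_of_mem_of_not_mem hP hPx).symm
    (ne_of_mem_of_not_mem hP hPy).symm

theorem MeetsEveryPart.color_eq_of_not_reachable_of_mem (hv : MeetsEveryPart G c W P v)
    (hs : ∀ x y, c x y = c y x) (hr : NoRainbowTriangle G c) (hW : G.IsClique W) (hx : x ∈ W)
    (hvx : G.Adj v x) (hPx : c v x ∈ P) (hy : y ∈ W)
    (hxy : ¬ (avoidingGraph G c W P).Reachable x y) : c x y = c v x := by
  obtain ⟨z, hz, hyz, hvz, hPz⟩ := hv y hy
  have hxz : ¬ (avoidingGraph G c W P).Reachable x z := fun h => hxy (h.trans hyz.symm)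
  have hadj := hW hx hz (ne_of_not_reachable hxz)
  have hP := color_mem_of_not_reachable hs hx hz hadj hxz
  rw [color_eq_of_reachable hs hr hx (fun t ht => hW hx ht) hyz hxy, hs v x]
  exact hr.color_eq hadj hvz.symm hvx.symm (hs v z ▸ ne_of_mem_of_not_mem hP hPz)
    (hs v z ▸ hs v x ▸ ne_of_mem_of_not_mem hPx hPz)

theorem MeetsEveryPart.color_eq_of_mem (hv : MeetsEveryPart G c W P v)
    (hs : ∀ x y, c x y = c y x) (hr : NoRainbowTriangle G c) (hW : G.IsClique W)
    (hfar : ∃ z ∈ W, ¬ (avoidingGraph G c W P).Reachable x z) (hx : x ∈ W) (hy : y ∈ W)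
    (hvx : G.Adj v x) (hvy : G.Adj v y) (hPx : c v x ∈ P) (hPy : c v y ∈ P) :
    c v x = c v y := by
  by_cases hxy : (avoidingGraph G c W P).Reachable x y
  · obtain ⟨z, hz, hxz⟩ := hfar
    calc c v x = c x z :=
          (hv.color_eq_of_not_reachable_of_mem hs hr hW hx hvx hPx hz hxz).symm
      _ = c z x := hs x z
      _ = c z y := color_eq_of_reachable hs hr hz (fun t ht => hW hz ht) hxy fun h => hxz h.symm
      _ = c y z := hs z y
      _ = c v y := hv.color_eq_of_not_reachable_of_mem hs hr hW hy hvy hPy hz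
          fun hyz => hxz (hxy.trans hyz)
  · rw [← hv.color_eq_of_not_reachable_of_mem hs hr hW hx hvx hPx hy hxy, hs x,
      hv.color_eq_of_not_reachable_of_mem hs hr hW hy hvy hPy hx fun h => hxy h.symm]

theorem MeetsEveryPart.exists_two_colors (hv : MeetsEveryPart G c W P v)
    (hs : ∀ x y, c x y = c y x) (hr : NoRainbowTriangle G c) (hW : G.IsClique W)
    (hx : x ∈ W) (hy : y ∈ W) (hxy : ¬ (avoidingGraph G c W P).Reachable x y) :
    ∃ p q, ∀ z ∈ W, G.Adj v z → c v z = p ∨ c v z = q := by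
  have far := hv.exists_not_reachable hx hy hxy
  obtain ⟨t, ht, -, hvt, hPt⟩ := hv x hx
  have outside : ∀ z ∈ W, G.Adj v z → c v z ∉ P → c v z = c v t := by
    intro z hz hvz hPz
    by_cases hzt : (avoidingGraph G c W P).Reachable z t
    · obtain ⟨a, ha, hza, hva, hPa⟩ := far z
      exact (color_eq_of_not_reachable hs hr hW hz ha hza hvz hva hPz hPa).trans
        (color_eq_of_not_reachable hs hr hW ht ha (fun h => hza (hzt.trans h)) hvt hva hPt
          hPa).symm
    · exact color_eq_of_not_reachable hs hr hW hz ht hzt hvz hvt hPz hPt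
  by_cases hin : ∃ b ∈ W, G.Adj v b ∧ c v b ∈ P
  · obtain ⟨b, hb, hvb, hPb⟩ := hin
    refine ⟨c v t, c v b, fun z hz hvz => ?_⟩
    by_cases hPz : c v z ∈ P
    · obtain ⟨a, ha, hza, -⟩ := far z
      exact .inr (hv.color_eq_of_mem hs hr hW ⟨a, ha, hza⟩ hz hb hvz hvb hPz hPb)
    · exact .inl (outside z hz hvz hPz)
  · exact ⟨c v t, c v t, fun z hz hvz => .inl (outside z hz hvz fun hPz => hin ⟨z, hz, hvz, hPz⟩)⟩

theorem splitByTwoColors_insert_of_two_colors (hs : ∀ x y, c x y = c y x) {p q : Fin k}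
    (hx : x ∈ W) (hv : v ∉ W) (hpq : ∀ z ∈ W, G.Adj v z → c v z = p ∨ c v z = q) :
    SplitByTwoColors G c (insert v W) := by
  refine ⟨p, q, v, Set.mem_insert v W, x, Set.mem_insert_of_mem v hx, fun ⟨walk⟩ => ?_⟩
  cases walk with
  | nil => exact hv hx
  | cons hvt _ =>
    obtain ⟨-, ht, hadj, hP⟩ := (avoidingGraph_adj hs).1 hvt
    exact hP (hpq _ (ht.resolve_left hadj.ne') hadj)

theorem SplitByTwoColors.insert_of_isClique (hs : ∀ x y, c x y = c y x) (hr : NoRainbowTriangle G c)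
    (hW : G.IsClique W) (h : SplitByTwoColors G c W) (hv : v ∉ W) :
    SplitByTwoColors G c (insert v W) := by
  obtain ⟨p, q, x, hx, y, hy, hxy⟩ := h
  by_cases hreach : ∀ z ∈ W, (avoidingGraph G c (insert v W) {p, q}).Reachable z v
  · have hmeets : MeetsEveryPart G c W {p, q} v := fun z hz =>
      exists_reachable_adj_of_reachable_insert hs hz hv (hreach z hz)
    obtain ⟨p', q', hpq⟩ := hmeets.exists_two_colors hs hr hW hx hy hxy
    exact splitByTwoColors_insert_of_two_colors hs hx hv hpq
  · push Not at hreach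
    obtain ⟨z, hz, hzv⟩ := hreach
    exact ⟨p, q, z, Set.mem_insert_of_mem v hz, v, Set.mem_insert v W, hzv⟩

-- The vertex `v` need not be adjacent to all of `W`, which leaves room for one missing edge.
theorem splitByTwoColors_insert_clique (hs : ∀ x y, c x y = c y x)
    (hr : NoRainbowTriangle G c) {S : Finset V} (hS : S.Nonempty) (hclique : G.IsClique ↑S)
    (hv : v ∉ S) : SplitByTwoColors G c (insert v ↑S) := by
  induction hS using Finset.Nonempty.cons_induction generalizing v with
  | singleton a =>
    exact splitByTwoColors_insert_of_two_colors hs (p := c v a) (q := c v a)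
      (by simp : a ∈ _) (by simpa using hv) (by simp)
  | cons a S ha _ ih =>
    rw [Finset.coe_cons] at hclique ⊢
    exact (ih (hclique.subset (Set.subset_insert a _)) ha).insert_of_isClique hs hr hclique
      (by simpa using hv)

theorem exists_not_preconnected_avoidingGraph [Finite V] [Nontrivial V]
    (hs : ∀ x y, c x y = c y x) (hr : NoRainbowTriangle G c) {u v : V}
    (hG : ∀ x y, x ≠ y → s(x, y) ≠ s(u, v) → G.Adj x y) :
    ∃ r b, ¬ (avoidingGraph G c Set.univ {r, b}).Preconnected := by
  have := Fintype.ofFinite V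
  classical
  have hclique : G.IsClique ↑({u}ᶜ : Finset V) := by
    intro x hx y hy hxy
    have hxu : x ≠ u := by simpa using hx
    have hyu : y ≠ u := by simpa using hy
    exact hG x y hxy (by simp [hxu, hyu])
  have hsplit := splitByTwoColors_insert_clique (v := u) hs hr
    (by obtain ⟨x, hx⟩ := exists_ne u; exact ⟨x, by simpa using hx⟩) hclique (by simp)
  rw [Finset.coe_compl, Finset.coe_singleton, Set.insert_eq, Set.union_compl_self] at hsplit
  obtain ⟨r, b, x, -, y, -, hxy⟩ := hsplit
  exact ⟨r, b, fun h => hxy (h x y)⟩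

end GallaiSplit

section TwoColoredCompleteGraph

variable {ι : Type*} [Fintype ι] {k : ℕ} {e : ι → ι → Fin k} {r b : Fin k}

theorem sum_le_sum_add_sum_of_forall_mem_or {s t : Finset ι} (h : ∀ i, i ∈ s ∨ i ∈ t)
    (w : ι → ℕ) : ∑ i, w i ≤ ∑ i ∈ s, w i + ∑ i ∈ t, w i := by
  classical
  rw [← Finset.sum_union_inter, show s ∪ t = Finset.univ from
    Finset.eq_univ_iff_forall.2 fun i => Finset.mem_union.2 (h i)]
  exact Nat.le_add_right _ _

theorem card_le_card_add_card_of_forall_mem_or {s t : Finset ι} (h : ∀ i, i ∈ s ∨ i ∈ t) :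
    Fintype.card ι ≤ #s + #t := by
  simpa using sum_le_sum_add_sum_of_forall_mem_or h 1

theorem sum_le_add_sum_colorNeighbors (he : ∀ i j, i ≠ j → e i j = r ∨ e i j = b)
    (w : ι → ℕ) (i : ι) :
    ∑ j, w j ≤ w i + ∑ j ∈ colorNeighbors ⊤ e i r, w j + ∑ j ∈ colorNeighbors ⊤ e i b, w j := by
  classical
  have hi : i ∉ colorNeighbors ⊤ e i r := by simp
  rw [← Finset.sum_insert hi]
  refine sum_le_sum_add_sum_of_forall_mem_or (fun j => ?_) w
  by_cases hij : i = j
  · exact .inl (hij ▸ Finset.mem_insert_self i _)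
  · simpa [hij, Ne.symm hij] using he i j hij

theorem card_le_one_add_card_colorNeighbors (he : ∀ i j, i ≠ j → e i j = r ∨ e i j = b)
    (i : ι) :
    Fintype.card ι ≤ 1 + #(colorNeighbors ⊤ e i r) + #(colorNeighbors ⊤ e i b) := by
  simpa using sum_le_add_sum_colorNeighbors he 1 i

theorem exists_colorNeighbors_cover_of_card_le_one [Nontrivial ι] (hs : ∀ i j, e i j = e j i)
    (he : ∀ i j, i ≠ j → e i j = r ∨ e i j = b) {i : ι}
    (hi : #(colorNeighbors ⊤ e i r) ≤ 1) :
    ∃ x p y q, ∀ z, z ∈ colorNeighbors ⊤ e x p ∨ z ∈ colorNeighbors ⊤ e y q := by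
  simp only [mem_colorNeighbors, top_adj]
  by_cases hr : ∃ t, i ≠ t ∧ e i t = r
  · obtain ⟨t, hit, ht⟩ := hr
    have blue : ∀ z, i ≠ z → z ≠ t → e i z = b := fun z hiz hzt =>
      (he i z hiz).resolve_left fun hz => hzt <|
        Finset.card_le_one.1 hi z (by simp [hiz, hz]) t (by simp [hit, ht])
    by_cases hj : ∃ j, i ≠ j ∧ j ≠ t ∧ e j i = e j t
    · obtain ⟨j, hij, hjt, hj⟩ := hj
      refine ⟨i, b, j, e j i, fun z => ?_⟩
      rcases eq_or_ne i z with rfl | hiz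
      · exact .inr ⟨hij.symm, rfl⟩
      rcases eq_or_ne z t with rfl | hzt
      · exact .inr ⟨hjt, hj.symm⟩
      · exact .inl ⟨hiz, blue z hiz hzt⟩
    · refine ⟨t, r, i, r, fun z => ?_⟩
      rcases eq_or_ne i z with rfl | hiz
      · exact .inl ⟨hit.symm, hs t i ▸ ht⟩
      rcases eq_or_ne z t with rfl | hzt
      · exact .inr ⟨hit, ht⟩
      · refine .inl ⟨hzt.symm, (he t z hzt.symm).resolve_right fun htz => hj ⟨z, hiz, hzt, ?_⟩⟩
        rw [hs z i, hs z t, htz, blue z hiz hzt]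
  · obtain ⟨j, hji⟩ := exists_ne i
    refine ⟨i, b, j, e j i, fun z => ?_⟩
    rcases eq_or_ne i z with rfl | hiz
    · exact .inr ⟨hji, rfl⟩
    · exact .inl ⟨hiz, (he i z hiz).resolve_left fun hz => hr ⟨z, hiz, hz⟩⟩

theorem exists_colorNeighbors_cover_of_card_le_four [Nontrivial ι] (hs : ∀ i j, e i j = e j i)
    (he : ∀ i j, i ≠ j → e i j = r ∨ e i j = b) (hι : Fintype.card ι ≤ 4) :
    ∃ x p y q, ∀ z, z ∈ colorNeighbors ⊤ e x p ∨ z ∈ colorNeighbors ⊤ e y q := by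
  obtain ⟨i, j, hij⟩ := exists_pair_ne ι
  rcases eq_or_ne r b with rfl | hrb
  · refine ⟨i, r, j, r, fun z => ?_⟩
    simp only [mem_colorNeighbors, top_adj]
    rcases eq_or_ne i z with rfl | hiz
    · exact .inr ⟨hij.symm, by simpa using he j i hij.symm⟩
    · exact .inl ⟨hiz, by simpa using he i z hiz⟩
  · classical
    have hdisj : Disjoint (colorNeighbors ⊤ e i r) (colorNeighbors ⊤ e i b) :=
      Finset.disjoint_left.2 fun z hr hb =>
        hrb ((mem_colorNeighbors.1 hr).2.symm.trans (mem_colorNeighbors.1 hb).2)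
    have hlt : #(colorNeighbors ⊤ e i r ∪ colorNeighbors ⊤ e i b) < Fintype.card ι :=
      Finset.card_lt_univ_of_notMem (x := i) (by simp)
    rw [Finset.card_union_of_disjoint hdisj] at hlt
    rcases (by omega : #(colorNeighbors ⊤ e i r) ≤ 1 ∨ #(colorNeighbors ⊤ e i b) ≤ 1) with h | h
    · exact exists_colorNeighbors_cover_of_card_le_one hs he h
    · exact exists_colorNeighbors_cover_of_card_le_one hs (fun i j hij => (he i j hij).symm) h

theorem exists_mem_colorNeighbors_pair (hs : ∀ i j, e i j = e j i)
    (he : ∀ i j, i ≠ j → e i j = r ∨ e i j = b) (hι : 5 ≤ Fintype.card ι)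
    (hdeg : ∀ i p, #(colorNeighbors ⊤ e i p) ≤ 2) {x y : ι} (hxy : x ≠ y) :
    ∃ z p, x ∈ colorNeighbors ⊤ e z p ∧ y ∈ colorNeighbors ⊤ e z p := by
  by_contra! h
  have hcover : ∀ z, z ∈ colorNeighbors ⊤ e x (e x y) ∨ z ∈ colorNeighbors ⊤ e y (e x y) := by
    simp only [mem_colorNeighbors, top_adj] at h ⊢
    intro z
    rcases eq_or_ne z x with rfl | hzx
    · exact .inr ⟨hxy.symm, hs y z⟩
    rcases eq_or_ne z y with rfl | hzy
    · exact .inl ⟨hxy, rfl⟩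
    have : e x z ≠ e y z := fun heq =>
      h z (e z x) ⟨hzx, rfl⟩ ⟨hzy, by rw [hs z x, hs z y, heq]⟩
    grind [he x y hxy, he x z hzx.symm, he y z hzy.symm]
  have := card_le_card_add_card_of_forall_mem_or hcover
  have := hdeg x (e x y)
  have := hdeg y (e x y)
  omega

theorem sum_le_of_pairwise_add_le [Nontrivial ι] {w : ι → ℕ} {m : ℕ}
    (hw : ∀ i, m - 1 ≤ w i) (hpair : ∀ i j, i ≠ j → w i + w j ≤ 2 * m - 1) :
    ∑ i, w i ≤ Fintype.card ι * (m - 1) + 1 := by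
  classical
  by_cases hsmall : ∀ i, w i ≤ m - 1
  · exact (Finset.sum_le_card_nsmul _ _ _ fun i _ => hsmall i).trans (Nat.le_add_right _ _)
  · push Not at hsmall
    obtain ⟨i, hi⟩ := hsmall
    obtain ⟨j, hji⟩ := exists_ne i
    have hi_le : w i ≤ m - 1 + 1 := by
      have := hpair j i hji
      have := hw j
      omega
    have hrest : ∑ t ∈ Finset.univ.erase i, w t ≤ (Fintype.card ι - 1) * (m - 1) := by
      refine (Finset.sum_le_card_nsmul _ _ (m - 1) fun t ht => ?_).trans_eq ?_
      · have := hpair t i (Finset.ne_of_mem_erase ht)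
        omega
      · rw [Finset.card_erase_of_mem (Finset.mem_univ i), Finset.card_univ, smul_eq_mul]
    calc ∑ t, w t = w i + ∑ t ∈ Finset.univ.erase i, w t :=
          (Finset.add_sum_erase _ w (Finset.mem_univ i)).symm
      _ ≤ m - 1 + 1 + (Fintype.card ι - 1) * (m - 1) := add_le_add hi_le hrest
      _ = (Fintype.card ι - 1 + 1) * (m - 1) + 1 := by ring
      _ = Fintype.card ι * (m - 1) + 1 := by rw [Nat.sub_add_cancel Fintype.card_pos]

theorem sum_le_five_mul_sub_four [Nontrivial ι] (hs : ∀ i j, e i j = e j i)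
    (he : ∀ i j, i ≠ j → e i j = r ∨ e i j = b) {w : ι → ℕ} {m : ℕ} (hm : 3 ≤ m)
    (hw : ∀ i p, ∑ j ∈ colorNeighbors ⊤ e i p, w j ≤ 2 * m - 1) :
    ∑ i, w i ≤ 5 * m - 4 := by
  by_contra! hlarge
  have hmin : ∀ i, m - 1 ≤ w i := fun i => by
    have := sum_le_add_sum_colorNeighbors he w i
    have := hw i r
    have := hw i b
    omega
  have hdeg : ∀ i p, #(colorNeighbors ⊤ e i p) ≤ 2 := fun i p => by
    by_contra! h
    have : #(colorNeighbors ⊤ e i p) * (m - 1) ≤ 2 * m - 1 :=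
      (Finset.card_nsmul_le_sum _ w _ fun j _ => hmin j).trans (hw i p)
    have := Nat.mul_le_mul_right (m - 1) h
    omega
  rcases le_or_gt (Fintype.card ι) 4 with hι | hι
  · obtain ⟨x, p, y, q, hcover⟩ := exists_colorNeighbors_cover_of_card_le_four hs he hι
    have := sum_le_sum_add_sum_of_forall_mem_or hcover w
    have := hw x p
    have := hw y q
    omega
  · obtain ⟨i⟩ : Nonempty ι := inferInstance
    have hcard : Fintype.card ι ≤ 5 := by
      have := card_le_one_add_card_colorNeighbors he i
      have := hdeg i r
      have := hdeg i b
      omega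
    have hpair : ∀ x y, x ≠ y → w x + w y ≤ 2 * m - 1 := fun x y hxy => by
      obtain ⟨z, p, hx, hy⟩ := exists_mem_colorNeighbors_pair hs he hι hdeg hxy
      exact (Finset.add_le_sum (fun _ _ => Nat.zero_le _) hx hy hxy).trans (hw z p)
    have := sum_le_of_pairwise_add_le hmin hpair
    have := Nat.mul_le_mul_right (m - 1) hcard
    omega

end TwoColoredCompleteGraph

section AlmostComplete

variable {V : Type*} [Fintype V] {k : ℕ} {G : SimpleGraph V} {c : V → V → Fin k} {u v : V}

theorem sum_card_fiber_le_card_colorNeighbors {ι : Type*} [Fintype ι] [DecidableEq ι]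
    {e : ι → ι → Fin k} {f : V → ι} {i : ι} {x : V} {p : Fin k}
    (h : ∀ y, i ≠ f y → e i (f y) = p → G.Adj x y ∧ c x y = p) :
    ∑ j ∈ colorNeighbors ⊤ e i p, #{y | f y = j} ≤ #(colorNeighbors G c x p) := by
  rw [Finset.sum_card_fiberwise_eq_card_filter]
  refine Finset.card_le_card fun y hy => mem_colorNeighbors.2 ?_
  obtain ⟨hne, hp⟩ := mem_colorNeighbors.1 (Finset.mem_filter.1 hy).2
  exact h y hne hp

theorem exists_reachable_ne_of_card_colorNeighbors_lt (hs : ∀ x y, c x y = c y x)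
    (hG : ∀ x y, x ≠ y → s(x, y) ≠ s(u, v) → G.Adj x y) {r b : Fin k} {x : V}
    (hx : #(colorNeighbors G c x r) + #(colorNeighbors G c x b) + 2 < Fintype.card V) :
    ∃ y, y ≠ u ∧ y ≠ v ∧ (avoidingGraph G c Set.univ {r, b}).Reachable x y := by
  classical
  by_contra! h
  have hcover : (Finset.univ : Finset V) ⊆
      colorNeighbors G c x r ∪ colorNeighbors G c x b ∪ {u, v} := by
    intro y _
    by_cases huv : y = u ∨ y = v
    · rcases huv with rfl | rfl <;> simp
    obtain ⟨hyu, hyv⟩ := not_or.1 huv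
    have hxy := h y hyu hyv
    have hadj := hG x y (ne_of_not_reachable hxy) (by simp [hyu, hyv])
    have hcolor := color_mem_of_not_reachable hs (Set.mem_univ x) (Set.mem_univ y) hadj hxy
    have : c x y = r ∨ c x y = b := by simpa using hcolor
    simp [hadj, this]
  have := Finset.card_le_card hcover
  have := Finset.card_union_le (colorNeighbors G c x r ∪ colorNeighbors G c x b) {u, v}
  have := Finset.card_union_le (colorNeighbors G c x r) (colorNeighbors G c x b)
  have := Finset.card_le_two (a := u) (b := v)
  rw [Finset.card_univ] at *
  omega

theorem card_le_of_adj_representatives {m : ℕ} (hm : 3 ≤ m) (hs : ∀ x y, c x y = c y x)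
    (hr : NoRainbowTriangle G c) (hdeg : ∀ x p, #(colorNeighbors G c x p) < 2 * m) {r b : Fin k}
    (hdisc : ¬ (avoidingGraph G c Set.univ {r, b}).Preconnected)
    {rep : (avoidingGraph G c Set.univ {r, b}).ConnectedComponent → V}
    (hrep : ∀ C, (avoidingGraph G c Set.univ {r, b}).connectedComponentMk (rep C) = C)
    (hadj : ∀ C y, rep C ≠ y → G.Adj (rep C) y) :
    Fintype.card V ≤ 5 * m - 4 := by
  classical
  have hfar : ∀ C y, C ≠ connectedComponentMk _ y →
      ¬ (avoidingGraph G c Set.univ {r, b}).Reachable (rep C) y := fun C y hne h =>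
    hne ((hrep C).symm.trans (ConnectedComponent.sound h))
  have hnontrivial : Nontrivial (avoidingGraph G c Set.univ {r, b}).ConnectedComponent := by
    simp only [Preconnected, not_forall] at hdisc
    obtain ⟨x, y, hxy⟩ := hdisc
    exact ⟨_, _, fun h => hxy (ConnectedComponent.exact h)⟩
  have htwo : ∀ C D, C ≠ D → c (rep C) (rep D) = r ∨ c (rep C) (rep D) = b := fun C D hCD => by
    have hCD := hfar C (rep D) (by rwa [hrep])
    exact color_mem_of_not_reachable hs (Set.mem_univ _) (Set.mem_univ _)
      (hadj C _ (ne_of_not_reachable hCD)) hCD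
  have hfiber : ∀ C p, ∑ D ∈ colorNeighbors ⊤ (fun C D => c (rep C) (rep D)) C p,
      #{y | connectedComponentMk _ y = D} ≤ #(colorNeighbors G c (rep C) p) := fun C p => by
    refine sum_card_fiber_le_card_colorNeighbors fun y hy hp => ?_
    have hCy := hfar C y hy
    refine ⟨hadj C y (ne_of_not_reachable hCy), hp ▸ ?_⟩
    exact color_eq_of_reachable hs hr (Set.mem_univ _) (fun t _ => hadj C t)
      (ConnectedComponent.exact (hrep _).symm) hCy
  calc Fintype.card V
      = ∑ C, #{y | (avoidingGraph G c Set.univ {r, b}).connectedComponentMk y = C} :=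
        Finset.card_eq_sum_card_fiberwise fun _ _ => Finset.mem_coe.2 (Finset.mem_univ _)
    _ ≤ 5 * m - 4 := sum_le_five_mul_sub_four (fun _ _ => hs _ _) htwo hm fun C p =>
        (hfiber C p).trans (Nat.le_sub_one_of_lt (hdeg _ p))

theorem isMonoCopy_starG_of_five_mul_sub_three_le_card {m : ℕ} (hm : 4 ≤ m)
    (hV : 5 * m - 3 ≤ Fintype.card V) (hs : ∀ x y, c x y = c y x)
    (hr : NoRainbowTriangle G c) (hG : ∀ x y, x ≠ y → s(x, y) ≠ s(u, v) → G.Adj x y) :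
    IsMonoCopy G c (starG (2 * m)) := by
  by_contra hstar
  have hdeg := (not_isMonoCopy_starG_iff hs).1 hstar
  have : Nontrivial V := Fintype.one_lt_card_iff_nontrivial.1 (by omega)
  obtain ⟨r, b, hdisc⟩ := exists_not_preconnected_avoidingGraph hs hr hG
  have hrep : ∀ C : (avoidingGraph G c Set.univ {r, b}).ConnectedComponent,
      ∃ x, x ≠ u ∧ x ≠ v ∧ (avoidingGraph G c Set.univ {r, b}).connectedComponentMk x = C := by
    refine ConnectedComponent.ind fun x => ?_
    have := hdeg x r
    have := hdeg x b
    obtain ⟨y, hyu, hyv, hxy⟩ := exists_reachable_ne_of_card_colorNeighbors_lt hs hG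
      (by omega : #(colorNeighbors G c x r) + #(colorNeighbors G c x b) + 2 < Fintype.card V)
    exact ⟨y, hyu, hyv, (ConnectedComponent.sound hxy).symm⟩
  choose rep hrep_u hrep_v hrep using hrep
  have := card_le_of_adj_representatives (by omega) hs hr hdeg hdisc hrep fun C y hy =>
    hG _ _ hy (by simp [hrep_u C, hrep_v C])
  omega

end AlmostComplete

section PentagonBlowUp

/-- The coloring of the complete graph on `ZMod 5` that decomposes it into two pentagons of
colors `0` and `1`; the argument is the difference of the two ends. Color `2`, at difference `0`,
is used inside the blown-up vertices. -/
def pentagonColor (d : ZMod 5) : Fin 3 :=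
  if d = 0 then 2 else if d = 1 ∨ d = -1 then 0 else 1

theorem pentagonColor_sub_comm (a b : ZMod 5) :
    pentagonColor (a - b) = pentagonColor (b - a) := by
  revert a b
  decide

theorem pentagonColor_not_rainbow (a b d : ZMod 5) :
    pentagonColor (a - b) = pentagonColor (b - d) ∨
      pentagonColor (b - d) = pentagonColor (a - d) ∨
      pentagonColor (a - b) = pentagonColor (a - d) := by
  revert a b d
  decide

theorem card_pentagonColor_fiber_le (a : ZMod 5) (p : Fin 3) :
    #{b | pentagonColor (a - b) = p} ≤ 2 := by
  revert a p
  decide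

theorem card_fin_natCast_zmod_five_eq_le {N m : ℕ} (hN : N ≤ 5 * m - 4) (a : ZMod 5) :
    #{x : Fin N | ((x : ℕ) : ZMod 5) = a} ≤ m - 1 + if a = 0 then 1 else 0 := by
  have hcount : #{x : Fin N | ((x : ℕ) : ZMod 5) = a} = N.count (· ≡ a.val [MOD 5]) := by
    simp_rw [Nat.count_eq_card_filter_range, Finset.card_filter,
      ← ZMod.natCast_eq_natCast_iff, ZMod.natCast_zmod_val]
    exact Fin.sum_univ_eq_sum_range (fun x => if (x : ZMod 5) = a then 1 else 0) N
  rw [hcount, Nat.count_modEq_card N (by norm_num), Nat.mod_eq_of_lt (ZMod.val_lt a)]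
  simp only [← ZMod.val_eq_zero a]
  split_ifs <;> omega

theorem card_fin_natCast_zmod_five_mem_lt {N m : ℕ} (hm : 1 ≤ m) (hN : N ≤ 5 * m - 4)
    {s : Finset (ZMod 5)} (hs : #s ≤ 2) :
    #{x : Fin N | ((x : ℕ) : ZMod 5) ∈ s} < 2 * m :=
  calc #{x : Fin N | ((x : ℕ) : ZMod 5) ∈ s}
      = ∑ a ∈ s, #{x : Fin N | ((x : ℕ) : ZMod 5) = a} :=
        (Finset.sum_card_fiberwise_eq_card_filter _ _ _).symm
    _ ≤ ∑ a ∈ s, (m - 1 + if a = 0 then 1 else 0) :=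
        Finset.sum_le_sum fun a _ => card_fin_natCast_zmod_five_eq_le hN a
    _ ≤ 2 * (m - 1) + 1 := by
        rw [Finset.sum_add_distrib, Finset.sum_const, smul_eq_mul, Finset.sum_ite_eq']
        exact add_le_add (Nat.mul_le_mul_right _ hs) (by split_ifs <;> simp)
    _ < 2 * m := by omega

theorem exists_noRainbowTriangle_not_isMonoCopy_starG {k m N : ℕ} (hk : 3 ≤ k)
    (hN : N ≤ 5 * m - 4) :
    ∃ c : Fin N → Fin N → Fin k, (∀ x y, c x y = c y x) ∧
      NoRainbowTriangle ⊤ c ∧ ¬ IsMonoCopy ⊤ c (starG (2 * m)) := by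
  set c : Fin N → Fin N → Fin k := fun x y =>
    Fin.castLE hk (pentagonColor ((x : ℕ) - (y : ℕ)))
  have hs : ∀ x y, c x y = c y x := fun x y =>
    congrArg (Fin.castLE hk) (pentagonColor_sub_comm _ _)
  refine ⟨c, hs, ?_, (not_isMonoCopy_starG_iff hs).2 fun x p => ?_⟩
  · rintro ⟨x, y, z, -, -, -, hxy, hyz, hxz⟩
    rcases pentagonColor_not_rainbow (x : ℕ) (y : ℕ) (z : ℕ) with h | h | h
    · exact hxy (congrArg (Fin.castLE hk) h)
    · exact hyz (congrArg (Fin.castLE hk) h)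
    · exact hxz (congrArg (Fin.castLE hk) h)
  · have hm : 1 ≤ m := by have := x.2; omega
    rcases (colorNeighbors ⊤ c x p).eq_empty_or_nonempty with hempty | ⟨y, hy⟩
    · rw [hempty, Finset.card_empty]
      omega
    · refine lt_of_le_of_lt (Finset.card_le_card fun z hz => ?_)
        (card_fin_natCast_zmod_five_mem_lt hm hN
          (card_pentagonColor_fiber_le (x : ℕ) (pentagonColor ((x : ℕ) - (y : ℕ)))))
      have : c x z = c x y := (mem_colorNeighbors.1 hz).2.trans (mem_colorNeighbors.1 hy).2.symm
      simpa using Fin.castLE_injective hk this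

end PentagonBlowUp

section TwoColorRamsey

theorem isMonoCopy_starG_of_card_eq_two_mul_sub_one {V : Type*} [Fintype V] {n : ℕ}
    (hn : Even n) (hpos : 0 < n) (hV : Fintype.card V = 2 * n - 1) {c : V → V → Fin 2}
    (hs : ∀ x y, c x y = c y x) : IsMonoCopy ⊤ c (starG n) := by
  classical
  by_contra hstar
  have hlt := (not_isMonoCopy_starG_iff hs).1 hstar
  have htwo : ∀ x y, x ≠ y → c x y = 0 ∨ c x y = 1 := by omega
  set R : SimpleGraph V := SimpleGraph.fromRel fun x y => c x y = 0
  have hneighbors : ∀ x, R.neighborFinset x = colorNeighbors ⊤ c x 0 := fun x => by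
    ext y
    simp [R, hs y x]
  have hodd : ∀ x, Odd (R.degree x) := fun x => by
    have hcard := card_le_one_add_card_colorNeighbors htwo x
    have hred := hlt x 0
    have hblue := hlt x 1
    rw [← R.card_neighborFinset_eq_degree, hneighbors,
      show #(colorNeighbors ⊤ c x 0) = n - 1 by omega]
    exact Nat.Even.sub_odd hpos hn odd_one
  have heven := R.even_card_odd_degree_vertices
  rw [Finset.filter_true_of_mem fun x _ => hodd x, Finset.card_univ, hV] at heven
  obtain ⟨a, ha⟩ := heven
  omega

theorem ramsey2_starG_le {n : ℕ} (hn : Even n) (hpos : 0 < n) : Ramsey2 (starG n) ≤ 2 * n - 1 :=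
  Nat.sInf_le fun _ hs =>
    isMonoCopy_starG_of_card_eq_two_mul_sub_one hn hpos (Fintype.card_fin _) hs

/-- The edges of color `0` in an almost regular 2-coloring of the complete graph on the vertices
`0, …, 4 * m - 2`: all edges of cyclic length between `2` and `m`, and the matching
`{1, 2}, {3, 4}, …, {4 * m - 3, 4 * m - 2}`. -/
def NearCirculantAdj (m x y : ℕ) : Prop :=
  (2 ≤ (x - y) + (y - x) ∧ (x - y) + (y - x) ≤ m) ∨
    (3 * m - 1 ≤ (x - y) + (y - x) ∧ (x - y) + (y - x) ≤ 4 * m - 3) ∨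
    ((x - y) + (y - x) = 1 ∧ (x + y) % 4 = 3)

theorem nearCirculantAdj_comm {m x y : ℕ} : NearCirculantAdj m x y ↔ NearCirculantAdj m y x := by
  simp only [NearCirculantAdj, add_comm]

/-- The number of steps from `x` to `y` around the cycle of length `M`. -/
def cyclicGap (M x y : ℕ) : ℕ :=
  if x ≤ y then y - x else y + M - x

theorem cyclicGap_injOn {M x : ℕ} (hx : x < M) : Set.InjOn (cyclicGap M x) (Set.Iio M) := by
  intro y hy z hz h
  simp only [cyclicGap, Set.mem_Iio] at *
  split_ifs at h <;> omega

theorem card_colorNeighbors_le_of_cyclicGap_mem {k M N : ℕ} (hN : N ≤ M)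
    {G : SimpleGraph (Fin N)} {c : Fin N → Fin N → Fin k} {x : Fin N} {p : Fin k} {s : Finset ℕ}
    (h : ∀ y, G.Adj x y → c x y = p → cyclicGap M x y ∈ s) : #(colorNeighbors G c x p) ≤ #s := by
  refine Finset.card_le_card_of_injOn (fun y => cyclicGap M x y) (fun y hy => ?_)
    fun y _ z _ hyz => Fin.ext <|
      cyclicGap_injOn (x.2.trans_le hN) (y.2.trans_le hN) (z.2.trans_le hN) hyz
  obtain ⟨hadj, hp⟩ := mem_colorNeighbors.1 hy
  exact h y hadj hp

theorem NearCirculantAdj.cyclicGap_mem {m x y : ℕ} (h : NearCirculantAdj m x y) :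
    cyclicGap (4 * m - 1) x y ∈ insert (if x % 2 = 1 then 1 else 4 * m - 2)
      (Finset.Icc 2 m ∪ Finset.Icc (3 * m - 1) (4 * m - 3)) := by
  simp only [NearCirculantAdj, cyclicGap, Finset.mem_insert, Finset.mem_union,
    Finset.mem_Icc] at *
  split_ifs <;> omega

theorem cyclicGap_mem_of_not_nearCirculantAdj {m x y : ℕ} (hx : x < 4 * m - 1)
    (hy : y < 4 * m - 1) (hxy : x ≠ y) (h01 : ¬ (x = 0 ∧ y = 1))
    (h : ¬ NearCirculantAdj m x y) :
    cyclicGap (4 * m - 1) x y ∈ insert (if x % 2 = 1 ∨ x = 0 then 4 * m - 2 else 1)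
      (Finset.Icc (m + 1) (3 * m - 2)) := by
  simp only [NearCirculantAdj, cyclicGap, Finset.mem_insert, Finset.mem_Icc] at *
  split_ifs <;> omega

theorem exists_not_isMonoCopy_compMinusEdge_starG {m N : ℕ} (hN : N ≤ 4 * m - 1) :
    ∃ c : Fin N → Fin N → Fin 2, (∀ x y, c x y = c y x) ∧
      ¬ IsMonoCopy (compMinusEdge N) c (starG (2 * m)) := by
  classical
  set c : Fin N → Fin N → Fin 2 := fun x y => if NearCirculantAdj m x y then 0 else 1
  have hs : ∀ x y, c x y = c y x := fun x y => by simp only [c, nearCirculantAdj_comm]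
  refine ⟨c, hs, (not_isMonoCopy_starG_iff hs).2 fun x p => ?_⟩
  have hlt : ∀ y : Fin N, (y : ℕ) < 4 * m - 1 := fun y => y.2.trans_le hN
  have := hlt x
  obtain rfl | rfl : p = 0 ∨ p = 1 := by omega
  · refine (card_colorNeighbors_le_of_cyclicGap_mem hN fun y _ hc =>
      NearCirculantAdj.cyclicGap_mem (by simpa [c] using hc)).trans_lt ?_
    refine (Finset.card_insert_le _ _).trans_lt ?_
    have := Finset.card_union_le (Finset.Icc 2 m) (Finset.Icc (3 * m - 1) (4 * m - 3))
    simp only [Nat.card_Icc] at this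
    omega
  · refine (card_colorNeighbors_le_of_cyclicGap_mem (G := compMinusEdge N) hN
      fun y hadj hc => cyclicGap_mem_of_not_nearCirculantAdj (hlt x) (hlt y)
        (Fin.val_ne_of_ne hadj.1) hadj.2.1 (by simpa [c] using hc)).trans_lt ?_
    refine (Finset.card_insert_le _ _).trans_lt ?_
    rw [Nat.card_Icc]
    omega

end TwoColorRamsey

section Stars

variable {k m : ℕ}

theorem adj_compMinusEdge_of_ne {N : ℕ} (hN : 2 ≤ N) {x y : Fin N} (hxy : x ≠ y)
    (hne : s(x, y) ≠ s((⟨0, by omega⟩ : Fin N), ⟨1, by omega⟩)) : (compMinusEdge N).Adj x y := by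
  simp only [ne_eq, Sym2.eq_iff, Fin.ext_iff, not_or] at hne
  exact ⟨hxy, hne⟩

theorem isMonoCopy_compMinusEdge_starG (hm : 4 ≤ m)
    {c : Fin (5 * m - 3) → Fin (5 * m - 3) → Fin k} (hs : ∀ x y, c x y = c y x)
    (hr : NoRainbowTriangle (compMinusEdge (5 * m - 3)) c) :
    IsMonoCopy (compMinusEdge (5 * m - 3)) c (starG (2 * m)) :=
  isMonoCopy_starG_of_five_mul_sub_three_le_card hm (Fintype.card_fin _).ge hs hr
    fun _ _ => adj_compMinusEdge_of_ne (by omega : 2 ≤ 5 * m - 3)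

theorem gallaiRamsey_starG (hk : 3 ≤ k) (hm : 4 ≤ m) :
    GallaiRamsey k (starG (2 * m)) = 5 * m - 3 := by
  have hupper : 5 * m - 3 ∈ {N | ∀ c : Fin N → Fin N → Fin k, (∀ x y, c x y = c y x) →
      NoRainbowTriangle ⊤ c → IsMonoCopy ⊤ c (starG (2 * m))} := fun c hs hr =>
    isMonoCopy_starG_of_five_mul_sub_three_le_card (u := ⟨0, by omega⟩) (v := ⟨0, by omega⟩) hm
      (Fintype.card_fin _).ge hs hr fun _ _ hxy _ => hxy
  refine le_antisymm (Nat.sInf_le hupper) (le_csInf ⟨_, hupper⟩ fun N hN => ?_)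
  by_contra! hlt
  obtain ⟨c, hs, hr, hstar⟩ := exists_noRainbowTriangle_not_isMonoCopy_starG (k := k) (m := m)
    hk (by omega : N ≤ 5 * m - 4)
  exact hstar (hN c hs hr)

theorem not_gallaiRamseyFull_starG (hk : 3 ≤ k) (hm : 4 ≤ m) :
    ¬ GallaiRamseyFull k (starG (2 * m)) := by
  rw [GallaiRamseyFull, gallaiRamsey_starG hk hm]
  rintro ⟨c, hs, hr, hstar⟩
  exact hstar (isMonoCopy_compMinusEdge_starG hm hs hr)

end Stars

theorem star_not_gallai_ramsey_full_general (k n : ℕ) (hk : 3 ≤ k) (hn : 8 ≤ n)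
    (hne : n % 2 = 0) :
    (∀ c : Fin (5 * n / 2 - 3) → Fin (5 * n / 2 - 3) → Fin k,
      (∀ x y, c x y = c y x) →
      NoRainbowTriangle (compMinusEdge (5 * n / 2 - 3)) c →
      IsMonoCopy (compMinusEdge (5 * n / 2 - 3)) c (starG n)) ∧
    GallaiRamsey k (starG n) = 5 * n / 2 - 3 ∧
    ¬ GallaiRamseyFull k (starG n) ∧
    (∃ c : Fin (Ramsey2 (starG n)) → Fin (Ramsey2 (starG n)) → Fin 2,
      (∀ x y, c x y = c y x) ∧
      ¬ IsMonoCopy (compMinusEdge (Ramsey2 (starG n))) c (starG n)) := by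
  obtain ⟨m, rfl⟩ : ∃ m, n = 2 * m := ⟨n / 2, by omega⟩
  have hm : 4 ≤ m := by omega
  have hR : Ramsey2 (starG (2 * m)) ≤ 4 * m - 1 :=
    (ramsey2_starG_le (even_two_mul m) (by omega)).trans_eq (by omega)
  rw [show 5 * (2 * m) / 2 - 3 = 5 * m - 3 by omega]
  exact ⟨fun _ hs hr => isMonoCopy_compMinusEdge_starG hm hs hr, gallaiRamsey_starG hk hm,
    not_gallaiRamseyFull_starG hk hm, exists_not_isMonoCopy_compMinusEdge_starG hR⟩

/-- For every `k ≥ 3` and even `n ≥ 12`, every rainbow-triangle-free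
`k`-coloring of the complete graph on `5n/2 − 3` vertices minus one edge
contains a monochromatic copy of the star `K_{1,n}`. Since
`GR_k(K_{1,n}) = 5n/2 − 3`, the star `K_{1,n}` is not Gallai-Ramsey-full,
although it is Ramsey-full. -/
theorem star_not_gallai_ramsey_full (k n : ℕ) (hk : 3 ≤ k) (hn : 12 ≤ n)
    (hne : n % 2 = 0) :
    (∀ c : Fin (5 * n / 2 - 3) → Fin (5 * n / 2 - 3) → Fin k,
      (∀ x y, c x y = c y x) →
      NoRainbowTriangle (compMinusEdge (5 * n / 2 - 3)) c →
      IsMonoCopy (compMinusEdge (5 * n / 2 - 3)) c (starG n)) ∧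
    GallaiRamsey k (starG n) = 5 * n / 2 - 3 ∧
    ¬ GallaiRamseyFull k (starG n) ∧
    (∃ c : Fin (Ramsey2 (starG n)) → Fin (Ramsey2 (starG n)) → Fin 2,
      (∀ x y, c x y = c y x) ∧
      ¬ IsMonoCopy (compMinusEdge (Ramsey2 (starG n))) c (starG n)) :=
  star_not_gallai_ramsey_full_general k n hk (by omega) hne
end
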